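/- (Multilateral analogue of Bailey's ₃ψ₃ summation, δ = 1 case.) Let n be a positive integer and q, s, a, x ∈ ℂ with 0 < |q| < 1, a ≠ 0, x ≠ 0, s ≠ 0. Assume that none of s, as, x, ax, sx^{-1}, asx equals q^m for any integer m (so that all factors below are nonzero), and assume the family over μ ∈ ℤⁿ on the right-hand side is absolutely summable. Then ∏_{i=1}^{n} (1 − q^{1+2n−2i}) · [(sx^{-1})_{∞ⁿ} (asx)_{∞ⁿ} (q^{2n})_{∞ⁿ} (q^{2n}/a)_{∞ⁿ} / ((s)_{∞ⁿ} (as)_{∞ⁿ} (q^{2n}x)_{∞ⁿ} (q^{2n}/(ax))_{∞ⁿ})] = ∑_{μ ∈ ℤⁿ} q^{(1−n)|μ| + 2n(μ)} s^{|μ|} · [(q^{2n}/(as);q)_μ (x^{-1};q)_μ (ax;q)_μ / ((as;q)_μ (q^{2n}x;q)_μ (q^{2n}/(ax);q)_μ)] · ∏_{1 ≤ i < j ≤ n} [(1 − q^{j−i+μ_i−μ_j})(1 − q^{1+2n−i−j+μ_i+μ_j}) / ((1 − q^{j−i})² (1 − q^{1+2n−i−j})²)]. -/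

import Mathlib

/-- The finite q-Pochhammer symbol `(a;q)_k = ∏_{i=0}^{k-1} (1 - a qⁱ)`. -/
noncomputable def qPoch (a q : ℂ) (k : ℕ) : ℂ :=
  ∏ i ∈ Finset.range k, (1 - a * q ^ i)

/-- The infinite q-Pochhammer symbol `(a;q)_∞ = ∏_{i=0}^{∞} (1 - a qⁱ)`. -/
noncomputable def qPochInf (a q : ℂ) : ℂ :=
  ∏' i : ℕ, (1 - a * q ^ i)

/-- The q-Pochhammer symbol extended to an arbitrary integer index:
`(a;q)_k = (a;q)_∞ / (a q^k;q)_∞`. -/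
noncomputable def qPochInt (a q : ℂ) (k : ℤ) : ℂ :=
  qPochInf a q / qPochInf (a * q ^ k) q

/-- The `t = q` specialization of the partition q-Pochhammer symbol, extended to
integer vectors: `(a;q)_μ = ∏_{i=1}^{n} (a q^{1-i};q)_{μ_i}`. -/
noncomputable def qPochIntVec (n : ℕ) (a q : ℂ) (μ : Fin n → ℤ) : ℂ :=
  ∏ i : Fin n, qPochInt (a * q ^ (-((i : ℕ) : ℤ))) q (μ i)

/-- The multiple infinite q-Pochhammer symbol `(a)_{∞ⁿ} = ∏_{i=1}^{n} (a q^{1-i};q)_∞`. -/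
noncomputable def qPochInfVec (n : ℕ) (a q : ℂ) : ℂ :=
  ∏ i : Fin n, qPochInf (a * q ^ (-((i : ℕ) : ℤ))) q


open Filter Topology

section basics
variable {q : ℂ}

lemma qp_summable (hq1 : ‖q‖ < 1) (a : ℂ) : Summable fun i : ℕ => ‖-(a * q ^ i)‖ := by
  simp only [norm_neg, norm_mul, norm_pow]
  exact (summable_geometric_of_lt_one (norm_nonneg _) hq1).mul_left _

lemma qp_multipliable (hq1 : ‖q‖ < 1) (a : ℂ) : Multipliable fun i : ℕ => (1 - a * q ^ i) := by
  simpa [sub_eq_add_neg] using multipliable_one_add_of_summable (qp_summable hq1 a)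

lemma qp_tendsto (hq1 : ‖q‖ < 1) (a : ℂ) :
    Tendsto (fun N => ∏ i ∈ Finset.range N, (1 - a * q ^ i)) atTop (𝓝 (qPochInf a q)) :=
  (qp_multipliable hq1 a).tendsto_prod_tprod_nat

lemma qp_step (hq1 : ‖q‖ < 1) (a : ℂ) : qPochInf a q = (1 - a) * qPochInf (a * q) q := by
  unfold qPochInf
  have := tprod_eq_zero_mul' (f := fun i : ℕ => (1 - a * q ^ i)) (by
    have := qp_multipliable hq1 (a * q)
    refine this.congr ?_
    intro i; ring)
  rw [this]
  simp only [pow_zero, mul_one]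
  congr 2
  ext i; ring

lemma qp_ne (hq1 : ‖q‖ < 1) (a : ℂ) (h : ∀ i : ℕ, a * q ^ i ≠ 1) : qPochInf a q ≠ 0 := by
  have := tprod_one_add_ne_zero_of_summable (f := fun i : ℕ => -(a * q ^ i)) (by
    intro i hi
    apply h i
    linear_combination -hi) (qp_summable hq1 a)
  simpa [qPochInf, sub_eq_add_neg] using this

lemma qp_split (hq1 : ‖q‖ < 1) (a : ℂ) (k : ℕ) :
    qPochInf a q = (∏ i ∈ Finset.range k, (1 - a * q ^ i)) * qPochInf (a * q ^ k) q := by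
  induction k with
  | zero => simp
  | succ k ih =>
    rw [Finset.prod_range_succ, ih, qp_step hq1 (a * q ^ k)]
    rw [pow_succ]; ring_nf

end basics

noncomputable def rho (q b c d w : ℂ) : ℂ :=
  (1 - b * w) * (1 - c * w) * (1 - d * w) /
    ((1 - q ^ 2 * w / b) * (1 - q ^ 2 * w / c) * (1 - q ^ 2 * w / d)) * (q ^ 2 / (b * c * d))

noncomputable def tt (q b c d : ℂ) (k : ℕ) : ℂ := ∏ i ∈ Finset.range k, rho q b c d (q ^ i)

lemma tt_succ (q b c d : ℂ) (k : ℕ) : tt q b c d (k+1) = tt q b c d k * rho q b c d (q ^ k) := by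
  simp [tt, Finset.prod_range_succ]

lemma tt_zero (q b c d : ℂ) : tt q b c d 0 = 1 := by simp [tt]

/-- good parameter -/
def Good (q b : ℂ) : Prop := b ≠ 0 ∧ ∀ k : ℕ, 1 - q ^ 2 * q ^ k / b ≠ 0

lemma shift_d {q b c d : ℂ} (hq : q ≠ 0) (hb : Good q b) (hc : Good q c) (hd : Good q (d * q))
    (hd' : Good q d) (k : ℕ) :
    (1 - d) * (1 - q / d) * tt q b c (d * q) k =
      tt q b c d k * ((q ^ k)⁻¹ * (1 - d * q ^ k) * (1 - q * q ^ k / d)) := by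
  induction k with
  | zero => simp [tt_zero]
  | succ k ih =>
    rw [tt_succ, tt_succ, ← mul_assoc, ih]
    unfold rho
    have h1 := hb.2 k
    have h2 := hc.2 k
    have h3 := hd.2 k
    have h4 := hd'.2 k
    have hb0 := hb.1
    have hc0 := hc.1
    have hd0 := hd'.1
    have e : q ^ 2 * q ^ k / (d * q) = q * q ^ k / d := by field_simp
    rw [e] at h3 ⊢
    rw [pow_succ q k]
    have hw : q ^ k ≠ 0 := pow_ne_zero _ hq
    generalize q ^ k = w at *
    have e4 : q * (w * q) / d = q ^ 2 * w / d := by ring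
    rw [e4]
    generalize q ^ 2 * w / d = z4 at *
    generalize q ^ 2 * w / b = z1 at *
    generalize q ^ 2 * w / c = z2 at *
    generalize q * w / d = z3 at *
    field_simp

lemma cert {q b c d : ℂ} (hq : q ≠ 0) (hb : Good q b) (hc : Good q c) (hd : Good q (d * q))
    (hd' : Good q d) (hd1 : d ≠ 1) (K : ℕ) :
    ∑ k ∈ Finset.range K, ((1 - q / d) * (1 - q / (b * c * d)) * (tt q b c (d * q) k * (1 - q * (q ^ k) ^ 2))
      - (1 - q / (b * d)) * (1 - q / (c * d)) * (tt q b c d k * (1 - q * (q ^ k) ^ 2))) =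
    -(tt q b c d K * (q ^ K)⁻¹) * ((1 - q ^ K) * (1 - q * q ^ K / b) * (1 - q * q ^ K / c) *
      (1 - q * q ^ K / d) / (1 - d)) := by
  induction K with
  | zero => simp
  | succ k ih =>
    rw [Finset.sum_range_succ, ih]
    have hd1' : 1 - d ≠ 0 := sub_ne_zero.2 hd1.symm
    have hs : (1 - q / d) * tt q b c (d * q) k =
      tt q b c d k * ((q ^ k)⁻¹ * (1 - d * q ^ k) * (1 - q * q ^ k / d)) / (1 - d) := by
      rw [eq_div_iff hd1', ← shift_d hq hb hc hd hd' k]; ring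
    have e : (1 - q / d) * (1 - q / (b * c * d)) * (tt q b c (d * q) k * (1 - q * (q ^ k) ^ 2))
      = (1 - q / (b * c * d)) * (1 - q * (q ^ k) ^ 2) * ((1 - q / d) * tt q b c (d * q) k) := by ring
    rw [e, hs, tt_succ]
    unfold rho
    have h1 := hb.2 k
    have h2 := hc.2 k
    have h4 := hd'.2 k
    have hb0 := hb.1
    have hc0 := hc.1
    have hd0 := hd'.1
    rw [pow_succ q k]
    have hw : q ^ k ≠ 0 := pow_ne_zero _ hq
    generalize q ^ k = w at *
    generalize tt q b c d k = t at *
    have e1 : q * (w * q) / b = q ^ 2 * w / b := by ring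
    have e2 : q * (w * q) / c = q ^ 2 * w / c := by ring
    have e4 : q * (w * q) / d = q ^ 2 * w / d := by ring
    rw [e1, e2, e4]
    have : t *
      ((1 - b * w) * (1 - c * w) * (1 - d * w) / ((1 - q ^ 2 * w / b) * (1 - q ^ 2 * w / c) * (1 - q ^ 2 * w / d)) *
          (q ^ 2 / (b * c * d))) * (w * q)⁻¹ *
      ((1 - w * q) * (1 - q ^ 2 * w / b) * (1 - q ^ 2 * w / c) * (1 - q ^ 2 * w / d) / (1 - d)) =
      t * ((1 - b * w) * (1 - c * w) * (1 - d * w)) * (q ^ 2 / (b * c * d)) * (w * q)⁻¹ *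
        ((1 - w * q) / (1 - d)) := by
      generalize q ^ 2 * w / d = z4 at *
      generalize q ^ 2 * w / b = z1 at *
      generalize q ^ 2 * w / c = z2 at *
      field_simp
    rw [neg_mul, neg_mul, this]
    clear this e1 e2 e4 h1 h2 h4 hs e ih
    field_simp
    ring
open Filter Topology

lemma pow_tendsto {q : ℂ} (hq1 : ‖q‖ < 1) : Tendsto (fun k : ℕ => q ^ k) atTop (𝓝 0) :=
  tendsto_pow_atTop_nhds_zero_of_norm_lt_one hq1

lemma rho_tendsto {q : ℂ} (hq1 : ‖q‖ < 1) (b c d : ℂ) :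
    Tendsto (fun k : ℕ => rho q b c d (q ^ k)) atTop (𝓝 (q ^ 2 / (b * c * d))) := by
  have h := pow_tendsto hq1
  have : ContinuousAt (fun w => rho q b c d w) 0 := by
    unfold rho
    fun_prop (disch := simp)
  have h2 := this.tendsto.comp h
  simpa [rho, Function.comp_def] using h2

lemma tt_summable {q : ℂ} (hq1 : ‖q‖ < 1) (b c d γ : ℂ) (h : ‖q ^ 2 / (b * c * d) * γ‖ < 1) :
    Summable (fun k => tt q b c d k * γ ^ k) := by
  obtain ⟨r, hr1, hr2⟩ := exists_between h
  refine summable_of_ratio_norm_eventually_le (r := r) hr2 ?_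
  have h1 : Tendsto (fun k : ℕ => ‖rho q b c d (q ^ k) * γ‖) atTop (𝓝 ‖q ^ 2 / (b * c * d) * γ‖) :=
    ((rho_tendsto hq1 b c d).mul_const γ).norm
  filter_upwards [h1.eventually (gt_mem_nhds hr1)] with k hk
  rw [tt_succ, pow_succ]
  have : tt q b c d k * rho q b c d (q ^ k) * (γ ^ k * γ) =
    (rho q b c d (q ^ k) * γ) * (tt q b c d k * γ ^ k) := by ring
  rw [this, norm_mul]
  gcongr

noncomputable def SS (q b c d : ℂ) : ℂ := ∑' k, tt q b c d k * (1 - q * (q ^ k) ^ 2)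

lemma summable_mul_conv {f g : ℕ → ℂ} {c : ℂ} (hf : Summable f) (hg : Tendsto g atTop (𝓝 c)) :
    Summable (fun k => f k * g k) :=
  Summable.mul_tendsto_const (c := c) hf.norm (by rwa [Nat.cofinite_eq_atTop])

lemma SS_rec {q b c d : ℂ} (hq : q ≠ 0) (hq1 : ‖q‖ < 1) (hb : Good q b) (hc : Good q c)
    (hd : Good q (d * q)) (hd' : Good q d) (hd1 : d ≠ 1)
    (hs : Summable (fun k => tt q b c d k * (q ^ k)⁻¹)) :
    (1 - q / d) * (1 - q / (b * c * d)) * SS q b c (d * q) =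
      (1 - q / (b * d)) * (1 - q / (c * d)) * SS q b c d := by
  have hw := pow_tendsto hq1
  have hd0 := hd'.1
  have hd1' : 1 - d ≠ 0 := sub_ne_zero.2 hd1.symm
  have hd2 : 1 - q / d ≠ 0 := by
    have := hd.2 0
    have e : q ^ 2 * q ^ 0 / (d * q) = q / d := by field_simp
    rwa [e] at this
  have s1 : Summable (fun k => tt q b c d k * (1 - q * (q ^ k) ^ 2)) := by
    have : Tendsto (fun k : ℕ => q ^ k * (1 - q * (q ^ k) ^ 2)) atTop (𝓝 (0 * (1 - q * 0 ^ 2))) :=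
      hw.mul ((tendsto_const_nhds).sub ((hw.pow 2).const_mul q))
    refine (summable_mul_conv hs this).congr ?_
    intro k
    have : q ^ k ≠ 0 := pow_ne_zero _ hq
    field_simp
  have s2 : Summable (fun k => tt q b c (d * q) k * (1 - q * (q ^ k) ^ 2)) := by
    have : Tendsto (fun k : ℕ => ((1 - d * q ^ k) * (1 - q * q ^ k / d)) / ((1 - d) * (1 - q / d)) *
      (1 - q * (q ^ k) ^ 2)) atTop
        (𝓝 (((1 - d * 0) * (1 - q * 0 / d)) / ((1 - d) * (1 - q / d)) * (1 - q * 0 ^ 2))) := by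
      have : Continuous (fun w : ℂ => ((1 - d * w) * (1 - q * w / d)) / ((1 - d) * (1 - q / d)) * (1 - q * w ^ 2)) := by
        fun_prop
      exact (this.tendsto 0).comp hw
    refine (summable_mul_conv hs this).congr ?_
    intro k
    have := shift_d hq hb hc hd hd' k
    rw [← mul_assoc]
    congr 1
    rw [mul_div_assoc', div_eq_iff (mul_ne_zero hd1' hd2)]
    linear_combination (-1) * this
  have key := cert hq hb hc hd hd' hd1
  have l1 := (((s2.mul_left ((1 - q / d) * (1 - q / (b * c * d)))).sub
    (s1.mul_left ((1 - q / (b * d)) * (1 - q / (c * d))))).hasSum).tendsto_sum_nat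
  rw [(s2.mul_left _).tsum_sub (s1.mul_left _), tsum_mul_left, tsum_mul_left] at l1
  have l2 : Tendsto (fun K => -(tt q b c d K * (q ^ K)⁻¹) * ((1 - q ^ K) * (1 - q * q ^ K / b) * (1 - q * q ^ K / c) *
      (1 - q * q ^ K / d) / (1 - d))) atTop (𝓝 (-0 * ((1 - 0) * (1 - q * 0 / b) * (1 - q * 0 / c) *
      (1 - q * 0 / d) / (1 - d)))) := by
    refine (hs.tendsto_atTop_zero).neg.mul ?_
    have : Continuous (fun w : ℂ => (1 - w) * (1 - q * w / b) * (1 - q * w / c) *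
      (1 - q * w / d) / (1 - d)) := by fun_prop
    exact (this.tendsto 0).comp hw
  simp only [key] at l1
  have := tendsto_nhds_unique l1 l2
  rw [neg_zero, zero_mul] at this
  exact sub_eq_zero.1 this

lemma good_shift {q d : ℂ} (hq : q ≠ 0) (h : Good q d) (N : ℕ) : Good q (d / q ^ N) := by
  refine ⟨div_ne_zero h.1 (pow_ne_zero _ hq), fun k => ?_⟩
  have := h.2 (k + N)
  have e : q ^ 2 * q ^ k / (d / q ^ N) = q ^ 2 * q ^ (k + N) / d := by
    rw [pow_add]; field_simp
  rwa [e]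

lemma SS_chain {q b c d : ℂ} (hq : q ≠ 0) (hq1 : ‖q‖ < 1) (hb : Good q b) (hc : Good q c)
    (hd : Good q d) (hd1 : ∀ N : ℕ, d / q ^ (N + 1) ≠ 1)
    (hs : ∀ N : ℕ, Summable (fun k => tt q b c (d / q ^ (N + 1)) k * (q ^ k)⁻¹)) (N : ℕ) :
    (∏ i ∈ Finset.range N, (1 - q ^ 2 / d * q ^ i)) * (∏ i ∈ Finset.range N, (1 - q ^ 2 / (b * c * d) * q ^ i))
      * SS q b c d = 
    (∏ i ∈ Finset.range N, (1 - q ^ 2 / (b * d) * q ^ i)) * (∏ i ∈ Finset.range N, (1 - q ^ 2 / (c * d) * q ^ i))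
      * SS q b c (d / q ^ N) := by
  induction N with
  | zero => simp
  | succ N ih =>
    have e : d / q ^ (N + 1) * q = d / q ^ N := by rw [pow_succ]; field_simp
    have := SS_rec (d := d / q ^ (N + 1)) hq hq1 hb hc (by rw [e]; exact good_shift hq hd N)
      (good_shift hq hd (N + 1)) (hd1 N) (hs N)
    rw [e] at this
    have hd0 := hd.1
    have hb0 := hb.1
    have hc0 := hc.1
    have e1 : q / (d / q ^ (N + 1)) = q ^ 2 / d * q ^ N := by rw [pow_succ]; field_simp
    have e2 : q / (b * c * (d / q ^ (N + 1))) = q ^ 2 / (b * c * d) * q ^ N := by rw [pow_succ]; field_simp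
    have e3 : q / (b * (d / q ^ (N + 1))) = q ^ 2 / (b * d) * q ^ N := by rw [pow_succ]; field_simp
    have e4 : q / (c * (d / q ^ (N + 1))) = q ^ 2 / (c * d) * q ^ N := by rw [pow_succ]; field_simp
    rw [e1, e2, e3, e4] at this
    simp only [Finset.prod_range_succ]
    linear_combination (1 - q ^ 2 / d * q ^ N) * (1 - q ^ 2 / (b * c * d) * q ^ N) * ih +
      (∏ i ∈ Finset.range N, (1 - q ^ 2 / (b * d) * q ^ i)) * (∏ i ∈ Finset.range N, (1 - q ^ 2 / (c * d) * q ^ i)) * this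

noncomputable def gg (q b c w : ℂ) : ℂ :=
  (1 - b * w) * (1 - c * w) / ((1 - q ^ 2 * w / b) * (1 - q ^ 2 * w / c)) * (q ^ 2 / (b * c))

noncomputable def SSinf (q b c : ℂ) : ℂ :=
  ∑' k : ℕ, (∏ i ∈ Finset.range k, (gg q b c (q ^ i) * (- q ^ i))) * (1 - q * (q ^ k) ^ 2)

lemma rho_gg {q b c d : ℂ} (hq : q ≠ 0) (hd : d ≠ 0) (N : ℕ) (w : ℂ) :
    rho q b c (d / q ^ N) w = gg q b c w * ((q ^ N / d - w) / (1 - q ^ 2 * w * (q ^ N / d))) := by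
  unfold rho gg
  have e : q ^ 2 * w / (d / q ^ N) = q ^ 2 * w * (q ^ N / d) := by field_simp
  rw [e]
  have e2 : q ^ 2 / (b * c * (d / q ^ N)) = q ^ 2 / (b * c) * (q ^ N / d) := by field_simp
  rw [e2]
  have e3 : (1 - d / q ^ N * w) * (q ^ N / d) = q ^ N / d - w := by field_simp
  rw [← e3]
  simp only [div_eq_mul_inv, mul_inv]
  ring

lemma SS_lim {q b c d : ℂ} (hq : q ≠ 0) (hq1 : ‖q‖ < 1) (hd : d ≠ 0) :
    Tendsto (fun N : ℕ => SS q b c (d / q ^ N)) atTop (𝓝 (SSinf q b c)) := by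
  unfold SS SSinf
  have hw := pow_tendsto hq1
  have hwd : Tendsto (fun N : ℕ => q ^ N / d) atTop (𝓝 0) := by simpa using hw.div_const d
  set M := ‖q ^ 2 / (b * c)‖ with hM
  have hM0 : 0 ≤ M := norm_nonneg _
  set ε : ℝ := 1 / (2 + 4 * M) with hε
  have hε0 : 0 < ε := by positivity
  have hε1 : ε ≤ 1 / 2 := by
    rw [hε]; apply one_div_le_one_div_of_le <;> linarith
  have hMε : M * (2 * ε) < 1 := by
    rw [hε]; rw [mul_one_div, mul_div_assoc', div_lt_one (by positivity)]; linarith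
  let B : ℕ → ℝ := fun k => (∏ i ∈ Finset.range k, (‖gg q b c (q ^ i)‖ * (2 * (ε + ‖q‖ ^ i)))) * 2
  refine tendsto_tsum_of_dominated_convergence (bound := B) ?_ ?_ ?_
  · have hlim : Tendsto (fun k : ℕ => ‖gg q b c (q ^ k)‖ * (2 * (ε + ‖q‖ ^ k))) atTop (𝓝 (M * (2 * (ε + 0)))) := by
      refine Tendsto.mul ?_ (Tendsto.const_mul _ (Tendsto.const_add _ (tendsto_pow_atTop_nhds_zero_of_lt_one (norm_nonneg _) hq1)))
      have : ContinuousAt (fun w => gg q b c w) 0 := by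
        unfold gg
        fun_prop (disch := simp)
      have h2 := (this.tendsto.comp hw).norm
      simpa [gg, Function.comp_def, hM] using h2
    rw [add_zero] at hlim
    obtain ⟨r, hr1, hr2⟩ := exists_between hMε
    refine summable_of_ratio_norm_eventually_le (r := r) hr2 ?_
    filter_upwards [hlim.eventually (gt_mem_nhds hr1)] with k hk
    simp only [B, Finset.prod_range_succ]
    have hnn : 0 ≤ ∏ i ∈ Finset.range k, (‖gg q b c (q ^ i)‖ * (2 * (ε + ‖q‖ ^ i))) :=
      Finset.prod_nonneg fun i _ => by positivity
    have hg0 : 0 ≤ ‖gg q b c (q ^ k)‖ * (2 * (ε + ‖q‖ ^ k)) := by positivity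
    generalize ‖gg q b c (q ^ k)‖ * (2 * (ε + ‖q‖ ^ k)) = G at *
    generalize ∏ i ∈ Finset.range k, (‖gg q b c (q ^ i)‖ * (2 * (ε + ‖q‖ ^ i))) = P at *
    rw [Real.norm_of_nonneg (mul_nonneg (mul_nonneg hnn hg0) zero_le_two), Real.norm_of_nonneg (mul_nonneg hnn zero_le_two)]
    nlinarith
  · intro k
    refine Tendsto.mul_const _ ?_
    unfold tt
    refine tendsto_finsetProd _ fun i _ => ?_
    simp only [rho_gg hq hd]
    refine Tendsto.const_mul _ ?_
    have : ContinuousAt (fun z : ℂ => (z - q ^ i) / (1 - q ^ 2 * q ^ i * z)) 0 := by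
      fun_prop (disch := simp)
    have h2 := this.tendsto.comp hwd
    simpa [Function.comp_def] using h2
  · have h1 : Tendsto (fun N : ℕ => ‖q ^ N / d‖) atTop (𝓝 0) := by simpa using hwd.norm
    filter_upwards [h1.eventually (gt_mem_nhds hε0)] with N hN k
    rw [norm_mul]
    simp only [B]
    have hqk : ∀ k : ℕ, ‖q ^ k‖ ≤ 1 := fun k => by
      rw [norm_pow]; exact pow_le_one₀ (norm_nonneg _) hq1.le
    have hle : ∀ k : ℕ, ‖1 - q * (q ^ k) ^ 2‖ ≤ 2 := by
      intro k
      refine (norm_sub_le _ _).trans ?_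
      rw [norm_one, norm_mul, norm_pow]
      have := hqk k
      have : ‖q‖ * ‖q ^ k‖ ^ 2 ≤ 1 * 1 ^ 2 := by gcongr
      linarith
    refine mul_le_mul ?_ (hle k) (norm_nonneg _) (Finset.prod_nonneg fun i _ => by positivity)
    unfold tt
    rw [norm_prod]
    refine Finset.prod_le_prod (fun _ _ => norm_nonneg _) fun i _ => ?_
    rw [rho_gg hq hd, norm_mul, norm_div]
    refine mul_le_mul_of_nonneg_left ?_ (norm_nonneg _)
    have hden : 1 / 2 ≤ ‖1 - q ^ 2 * q ^ i * (q ^ N / d)‖ := by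
      have h3 : ‖q ^ 2 * q ^ i * (q ^ N / d)‖ ≤ 1 / 2 := by
        rw [norm_mul, norm_mul]
        have := hqk 2
        have := hqk i
        calc _ ≤ 1 * 1 * ε := by gcongr
          _ ≤ _ := by linarith
      have := norm_sub_norm_le (1 : ℂ) (q ^ 2 * q ^ i * (q ^ N / d))
      rw [norm_one] at this
      linarith
    rw [div_le_iff₀ (by linarith)]
    have hnum : ‖q ^ N / d - q ^ i‖ ≤ ε + ‖q‖ ^ i := by
      refine (norm_sub_le _ _).trans ?_
      rw [norm_pow]; linarith
    have : 0 ≤ ε + ‖q‖ ^ i := by positivity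
    nlinarith

lemma pow_ne_one' {q : ℂ} (hq1 : ‖q‖ < 1) (N : ℕ) : q ^ (N + 1) ≠ 1 := by
  intro h
  have : ‖q ^ (N + 1)‖ < 1 := by
    rw [norm_pow]; exact pow_lt_one₀ (norm_nonneg _) hq1 (by omega)
  rw [h] at this
  simp at this

lemma good_one {q : ℂ} (hq1 : ‖q‖ < 1) : Good q 1 := by
  refine ⟨one_ne_zero, fun k => ?_⟩
  rw [div_one, ← pow_add, sub_ne_zero, show 2 + k = (k + 1) + 1 by ring]
  exact (pow_ne_one' hq1 _).symm

lemma tt_term {q b c : ℂ} (hq : q ≠ 0) (N k : ℕ) (hk : N < k) : tt q b c (1 / q ^ N) k = 0 := by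
  unfold tt
  refine Finset.prod_eq_zero (Finset.mem_range.2 hk) ?_
  unfold rho
  have : 1 - 1 / q ^ N * q ^ N = 0 := by field_simp; simp
  rw [this]; simp

lemma SS_one {q b c : ℂ} (hq : q ≠ 0) : SS q b c 1 = 1 - q := by
  unfold SS
  rw [tsum_eq_single 0]
  · simp [tt_zero]
  · intro k hk
    have := tt_term (b := b) (c := c) hq 0 k (by omega)
    simp only [pow_zero, div_one] at this
    rw [this, zero_mul]

lemma SS_chain_lim {q b c d : ℂ} (hq : q ≠ 0) (hq1 : ‖q‖ < 1) (hb : Good q b) (hc : Good q c)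
    (hd : Good q d) (hd1 : ∀ N : ℕ, d / q ^ (N + 1) ≠ 1)
    (hs : ∀ N : ℕ, Summable (fun k => tt q b c (d / q ^ (N + 1)) k * (q ^ k)⁻¹)) :
    qPochInf (q ^ 2 / d) q * qPochInf (q ^ 2 / (b * c * d)) q * SS q b c d =
    qPochInf (q ^ 2 / (b * d)) q * qPochInf (q ^ 2 / (c * d)) q * SSinf q b c := by
  have l1 := ((qp_tendsto hq1 (q ^ 2 / d)).mul (qp_tendsto hq1 (q ^ 2 / (b * c * d)))).mul_const (SS q b c d)
  have l2 := ((qp_tendsto hq1 (q ^ 2 / (b * d))).mul (qp_tendsto hq1 (q ^ 2 / (c * d)))).mul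
    (SS_lim (b := b) (c := c) hq hq1 hd.1)
  simp only [SS_chain hq hq1 hb hc hd hd1 hs] at l1
  exact tendsto_nhds_unique l1 l2

lemma good_ne {q b : ℂ} (hq1 : ‖q‖ < 1) (hb : Good q b) : qPochInf (q ^ 2 / b) q ≠ 0 := by
  apply qp_ne hq1
  intro i hi
  apply hb.2 i
  rw [← hi]; ring

theorem SS_eval {q b c d : ℂ} (hq : q ≠ 0) (hq1 : ‖q‖ < 1) (hb : Good q b) (hc : Good q c)
    (hd : Good q d) (hd1 : ∀ N : ℕ, d / q ^ (N + 1) ≠ 1) (hn : ‖q ^ 2 / (b * c * d)‖ < 1) :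
    SS q b c d = qPochInf q q * qPochInf (q ^ 2 / (b * c)) q * qPochInf (q ^ 2 / (b * d)) q *
      qPochInf (q ^ 2 / (c * d)) q / (qPochInf (q ^ 2 / b) q * qPochInf (q ^ 2 / c) q *
      qPochInf (q ^ 2 / d) q * qPochInf (q ^ 2 / (b * c * d)) q) := by
  have h1 := SS_chain_lim hq hq1 hb hc hd hd1 (by
    intro N
    have := tt_summable hq1 b c (d / q ^ (N + 1)) q⁻¹ (by
      have e : q ^ 2 / (b * c * (d / q ^ (N + 1))) * q⁻¹ = q ^ 2 / (b * c * d) * q ^ N := by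
        have := hd.1
        have := hb.1
        have := hc.1
        rw [pow_succ]; field_simp; ring
      rw [e, norm_mul, norm_pow]
      exact mul_lt_one_of_nonneg_of_lt_one_left (norm_nonneg _) hn (pow_le_one₀ (norm_nonneg _) hq1.le))
    simpa [inv_pow] using this)
  have h2 := SS_chain_lim hq hq1 hb hc (good_one hq1) (by
    intro N h
    apply pow_ne_one' hq1 N
    rw [div_eq_iff (pow_ne_zero _ hq)] at h
    simpa using h.symm) (by
    intro N
    apply summable_of_ne_finset_zero (s := Finset.range (N + 2))
    intro k hk
    rw [tt_term hq _ _ (by have := Finset.mem_range.not.1 hk; omega), zero_mul])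
  rw [SS_one hq] at h2
  simp only [div_one, mul_one] at h2
  have nb := good_ne hq1 hb
  have nc := good_ne hq1 hc
  have nd := good_ne hq1 hd
  have nq : qPochInf (q ^ 2 / (b * c * d)) q ≠ 0 := by
    apply qp_ne hq1
    intro i hi
    have : ‖q ^ 2 / (b * c * d) * q ^ i‖ < 1 := by
      rw [norm_mul, norm_pow]
      exact mul_lt_one_of_nonneg_of_lt_one_left (norm_nonneg _) hn (pow_le_one₀ (norm_nonneg _) hq1.le)
    rw [hi] at this; simp at this
  have hqq := qp_step hq1 q
  rw [← pow_two] at hqq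
  rw [eq_div_iff (by positivity), hqq]
  linear_combination qPochInf (q ^ 2 / b) q * qPochInf (q ^ 2 / c) q * h1 -
    qPochInf (q ^ 2 / (b * d)) q * qPochInf (q ^ 2 / (c * d)) q * h2
open Filter Topology

noncomputable def pol (a b : ℕ → ℂ) (m j : ℕ) : Polynomial ℂ :=
  (∏ k ∈ Finset.range j, (1 - Polynomial.C (a k) * Polynomial.X)) *
    ∏ k ∈ Finset.Ico j m, (1 - Polynomial.C (b k) * Polynomial.X)

lemma pol_succ (a b : ℕ → ℂ) (m j : ℕ) (hj : j < m + 1) :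
    pol a b (m + 1) (j + 1) = Polynomial.C (b j - a j) * (pol a (fun k => b (k + 1)) m j * Polynomial.X)
      + pol a b (m + 1) j := by
  unfold pol
  rw [Finset.prod_range_succ, Finset.prod_eq_prod_Ico_succ_bot hj]
  rw [← Finset.prod_Ico_add' (fun k => (1 - Polynomial.C (b k) * Polynomial.X)) j m 1]
  simp only [Polynomial.C_sub]
  ring

lemma pol_coeff_zero (a b : ℕ → ℂ) (m j : ℕ) : (pol a b m j).coeff 0 = 1 := by
  simp [Polynomial.coeff_zero_eq_eval_zero, pol, Polynomial.eval_prod]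

lemma pol_deg (a b : ℕ → ℂ) (m j : ℕ) (hj : j ≤ m) : (pol a b m j).natDegree < m + 1 := by
  have hl : ∀ c : ℂ, (1 - Polynomial.C c * Polynomial.X : Polynomial ℂ).natDegree ≤ 1 := by
    intro c; compute_degree
  have h1 : (∏ k ∈ Finset.range j, (1 - Polynomial.C (a k) * Polynomial.X)).natDegree ≤ j := by
    refine (Polynomial.natDegree_prod_le _ _).trans ?_
    refine (Finset.sum_le_sum fun i _ => hl (a i)).trans ?_
    simp
  have h2 : (∏ k ∈ Finset.Ico j m, (1 - Polynomial.C (b k) * Polynomial.X)).natDegree ≤ m - j := by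
    refine (Polynomial.natDegree_prod_le _ _).trans ?_
    refine (Finset.sum_le_sum fun i _ => hl (b i)).trans ?_
    simp
  have := Polynomial.natDegree_mul_le (p := ∏ k ∈ Finset.range j, (1 - Polynomial.C (a k) * Polynomial.X))
    (q := ∏ k ∈ Finset.Ico j m, (1 - Polynomial.C (b k) * Polynomial.X))
  unfold pol
  omega

lemma det_pol (m : ℕ) : ∀ (a b : ℕ → ℂ),
    Matrix.det (Matrix.of fun (i j : Fin (m + 1)) => (pol a b m j).coeff i) =
      ∏ l ∈ Finset.range m, ∏ k ∈ Finset.range (l + 1), (b l - a k) := by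
  induction m with
  | zero => intro a b; simp [pol_coeff_zero]
  | succ m ih =>
    intro a b
    let B : Matrix (Fin (m + 2)) (Fin (m + 2)) ℂ := Matrix.of fun i j =>
      Fin.cases ((pol a b (m+1) 0).coeff i) (fun j' : Fin (m+1) =>
        (b j' - a j') * (pol a (fun k => b (k + 1)) m j' * Polynomial.X).coeff i) j
    have h1 : Matrix.det (Matrix.of fun (i j : Fin (m + 2)) => (pol a b (m+1) j).coeff i) = B.det := by
      refine Matrix.det_eq_of_forall_col_eq_smul_add_pred (fun _ => 1) ?_ ?_
      · intro i; simp [B]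
      · intro i j
        simp only [Matrix.of_apply, B, Fin.cases_succ, Fin.val_succ, Fin.val_castSucc]
        rw [pol_succ a b m j (by omega)]
        simp only [Polynomial.coeff_add, Polynomial.coeff_C_mul, one_mul]
    rw [h1, Matrix.det_succ_row_zero, Fin.sum_univ_succ, Finset.sum_eq_zero]
    · have h2 : B.submatrix Fin.succ (Fin.succAbove 0) = Matrix.of fun i j : Fin (m+1) =>
          (b j - a j) * (Matrix.of fun (i j : Fin (m + 1)) => (pol a (fun k => b (k + 1)) m j).coeff i) i j := by
        ext i j
        simp [B]
      rw [h2, Matrix.det_mul_row, ih]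
      simp only [Matrix.of_apply, B, Fin.cases_zero, Fin.val_zero, pol_coeff_zero]
      have h3 : ∏ l ∈ Finset.range (m + 1), ∏ k ∈ Finset.range (l + 1), (b l - a k) =
        ∏ l ∈ Finset.range (m + 1), ((∏ k ∈ Finset.range l, (b l - a k)) * (b l - a l)) := by
        simp only [Finset.prod_range_succ]
      rw [h3, Finset.prod_mul_distrib, Finset.prod_range_succ' (fun l => ∏ k ∈ Finset.range l, (b l - a k))]
      rw [← Fin.prod_univ_eq_prod_range (fun l => b l - a l) (m + 1)]
      simp
      ring
    · intro j _
      simp [B]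

lemma det_eval_pol (m : ℕ) (a b : ℕ → ℂ) (X : Fin (m + 1) → ℂ) :
    Matrix.det (Matrix.of fun (i j : Fin (m + 1)) =>
      (∏ k ∈ Finset.range j, (1 - a k * X i)) * ∏ k ∈ Finset.Ico (j : ℕ) m, (1 - b k * X i)) =
    (∏ i : Fin (m + 1), ∏ j ∈ Finset.Ioi i, (X j - X i)) *
      ∏ l ∈ Finset.range m, ∏ k ∈ Finset.range (l + 1), (b l - a k) := by
  rw [← det_pol, ← Matrix.det_vandermonde, ← Matrix.det_mul]
  congr 1
  ext i j
  simp only [Matrix.of_apply, Matrix.mul_apply, Matrix.vandermonde_apply]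
  rw [Fin.sum_univ_eq_sum_range (fun k => X i ^ k * (pol a b m j).coeff k)]
  have := Polynomial.eval_eq_sum_range' (pol_deg a b m j (by omega)) (X i)
  simp only [mul_comm (X i ^ _)]
  rw [← this]
  simp [pol, Polynomial.eval_mul, Polynomial.eval_prod]

lemma hankel {n : ℕ} (w y : ℕ → ℂ) (P Q : Fin n → Polynomial ℂ)
    (hP : ∀ i, (P i).natDegree = i) (hPm : ∀ i, (P i).Monic)
    (hQ : ∀ i, (Q i).natDegree = i) (hQm : ∀ i, (Q i).Monic)
    (hs : ∀ i j : Fin n, Summable fun k => w k * y k ^ ((i : ℕ) + j)) :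
    Matrix.det (Matrix.of fun i j : Fin n => ∑' k, w k * ((P i).eval (y k) * (Q j).eval (y k))) =
    Matrix.det (Matrix.of fun i j : Fin n => ∑' k, w k * y k ^ ((i : ℕ) + j)) := by
  have e : (Matrix.of fun i j : Fin n => ∑' k, w k * ((P i).eval (y k) * (Q j).eval (y k))) =
    (Matrix.of fun i j : Fin n => (P j).coeff i).transpose * (Matrix.of fun i j : Fin n => ∑' k, w k * y k ^ ((i : ℕ) + j))
      * (Matrix.of fun i j : Fin n => (Q j).coeff i) := by
    ext i j
    simp only [Matrix.of_apply, Matrix.mul_apply, Matrix.transpose_apply]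
    have ev : ∀ (R : Fin n → Polynomial ℂ) (hR : ∀ i, (R i).natDegree = i) (i : Fin n) (z : ℂ),
        (R i).eval z = ∑ a : Fin n, (R i).coeff a * z ^ (a : ℕ) := by
      intro R hR i z
      rw [Polynomial.eval_eq_sum_range' (n := n) (by rw [hR]; exact i.2)]
      rw [Fin.sum_univ_eq_sum_range (fun k => (R i).coeff k * z ^ k)]
    have e1 : ∀ k, w k * ((P i).eval (y k) * (Q j).eval (y k)) =
        ∑ x : Fin n, ∑ x1 : Fin n, (P i).coeff x1 * (Q j).coeff x * (w k * y k ^ ((x1 : ℕ) + x)) := by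
      intro k
      rw [ev P hP, ev Q hQ, Finset.sum_mul_sum, Finset.sum_comm, Finset.mul_sum]
      refine Finset.sum_congr rfl fun x _ => ?_
      rw [Finset.mul_sum]
      refine Finset.sum_congr rfl fun x1 _ => ?_
      rw [pow_add]; ring
    simp only [e1]
    rw [Summable.tsum_finsetSum (fun x _ => summable_sum fun x1 _ => (hs x1 x).mul_left _)]
    refine Finset.sum_congr rfl fun x _ => ?_
    rw [Summable.tsum_finsetSum (fun x1 _ => (hs x1 x).mul_left _), Finset.sum_mul]
    refine Finset.sum_congr rfl fun x1 _ => ?_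
    rw [tsum_mul_left]; ring
  rw [e, Matrix.det_mul, Matrix.det_mul, Matrix.det_transpose, Matrix.det_matrixOfPolynomials P hP hPm,
    Matrix.det_matrixOfPolynomials Q hQ hQm]
  simp

lemma hasSum_pi {n : ℕ} : ∀ (f : Fin n → ℤ → ℂ) (_ : ∀ i, Summable (f i)),
    HasSum (fun ν : Fin n → ℤ => ∏ i, f i (ν i)) (∏ i, ∑' k, f i k) := by
  induction n with
  | zero => 
    intro f _
    simp only [Finset.univ_eq_empty, Finset.prod_empty]
    exact hasSum_unique (fun _ : Fin 0 → ℤ => (1 : ℂ))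
  | succ n ih =>
    intro f hf
    rw [← (Fin.consEquiv (fun _ : Fin (n + 1) => ℤ)).hasSum_iff]
    rw [Fin.prod_univ_succ]
    have h1 := ih (fun i => f i.succ) (fun i => hf i.succ)
    have h2 := (hf 0).hasSum
    have h3 := summable_mul_of_summable_norm (hf 0).norm h1.summable.norm
    have h4 := h2.mul h1 h3
    refine h4.congr_fun ?_ 
    intro x
    simp [Fin.prod_univ_succ, Fin.consEquiv]

lemma hasSum_det {n : ℕ} (a : Fin n → ℤ → ℂ) (Y : ℤ → ℂ) (Q : Fin n → Polynomial ℂ)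
    (hQ : ∀ i, (Q i).natDegree = i) (hQm : ∀ i, (Q i).Monic)
    (hs : ∀ i j : Fin n, Summable fun k => a i k * (Q j).eval (Y k)) :
    HasSum (fun ν : Fin n → ℤ => (∏ i, a i (ν i)) * ∏ i : Fin n, ∏ j ∈ Finset.Ioi i, (Y (ν j) - Y (ν i)))
      (Matrix.det (Matrix.of fun i j : Fin n => ∑' k, a i k * (Q j).eval (Y k))) := by
  have e : ∀ ν : Fin n → ℤ, (∏ i, a i (ν i)) * ∏ i : Fin n, ∏ j ∈ Finset.Ioi i, (Y (ν j) - Y (ν i)) =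
      ∑ σ : Equiv.Perm (Fin n), (Equiv.Perm.sign σ : ℂ) * ∏ i, (a i (ν i) * (Q (σ i)).eval (Y (ν i))) := by
    intro ν
    rw [← Matrix.det_vandermonde (fun i => Y (ν i)),
      Matrix.det_eval_matrixOfPolynomials_eq_det_vandermonde (fun i => Y (ν i)) Q hQ hQm,
      ← Matrix.det_transpose, Matrix.det_apply', Finset.mul_sum]
    refine Finset.sum_congr rfl fun σ _ => ?_
    rw [Finset.prod_mul_distrib]
    simp only [Matrix.transpose_apply, Matrix.of_apply]
    ring
  simp only [e]
  rw [← Matrix.det_transpose, Matrix.det_apply']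
  refine hasSum_sum fun σ _ => ?_
  refine HasSum.mul_left _ ?_
  simp only [Matrix.transpose_apply, Matrix.of_apply]
  exact hasSum_pi (fun i k => a i k * (Q (σ i)).eval (Y k)) (fun i => hs i (σ i))
open Filter Topology

def NP (q b : ℂ) : Prop := b ≠ 0 ∧ ∀ m : ℤ, b ≠ q ^ m

lemma NP.ne1 {q b : ℂ} (h : NP q b) (hq : q ≠ 0) (m : ℤ) : 1 - b * q ^ m ≠ 0 := by
  intro h2
  apply h.2 (-m)
  have : q ^ m ≠ 0 := zpow_ne_zero _ hq
  rw [zpow_neg]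
  field_simp
  linear_combination -h2

lemma NP.ne2 {q b : ℂ} (h : NP q b) (hq : q ≠ 0) (m : ℤ) : 1 - q ^ m / b ≠ 0 := by
  intro h2
  apply h.2 m
  have := h.1
  field_simp at h2
  linear_combination h2

lemma NP.good {q b : ℂ} (h : NP q b) (hq : q ≠ 0) : Good q b := by
  refine ⟨h.1, fun k => ?_⟩
  have := h.ne2 hq (2 + k)
  rwa [zpow_add₀ hq, zpow_natCast, zpow_ofNat] at this

lemma NP.mul {q b : ℂ} (h : NP q b) (hq : q ≠ 0) (k : ℤ) : NP q (b * q ^ k) := by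
  refine ⟨mul_ne_zero h.1 (zpow_ne_zero _ hq), fun m hm => ?_⟩
  apply h.2 (m - k)
  rw [zpow_sub₀ hq, ← hm]
  have : q ^ k ≠ 0 := zpow_ne_zero _ hq
  field_simp

noncomputable def VV (q : ℂ) : ℕ → Polynomial ℂ
  | 0 => 1
  | 1 => Polynomial.X
  | (n + 2) => Polynomial.X * VV q (n + 1) - Polynomial.C q * VV q n

lemma VV_monic (q : ℂ) : ∀ n, (VV q n).Monic ∧ (VV q n).natDegree = n
  | 0 => by simp [VV]
  | 1 => by simp [VV, Polynomial.monic_X]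
  | (n + 2) => by
    obtain ⟨h1, h2⟩ := VV_monic q (n + 1)
    obtain ⟨h3, h4⟩ := VV_monic q n
    have m1 : (Polynomial.X * VV q (n + 1)).Monic := Polynomial.monic_X.mul h1
    have d1 : (Polynomial.X * VV q (n + 1)).natDegree = n + 2 := by
      rw [Polynomial.Monic.natDegree_mul Polynomial.monic_X h1, h2, Polynomial.natDegree_X]; ring
    have d2 : (Polynomial.C q * VV q n).natDegree ≤ n := by
      refine (Polynomial.natDegree_C_mul_le _ _).trans h4.le
    have hlt : (Polynomial.C q * VV q n).natDegree < (Polynomial.X * VV q (n + 1)).natDegree := by omega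
    rw [VV]
    refine ⟨m1.sub_of_left ?_, ?_⟩
    · exact Polynomial.degree_lt_degree hlt
    · rw [Polynomial.natDegree_sub_eq_left_of_natDegree_lt hlt, d1]

lemma VV_eval (q w : ℂ) (hw : w ≠ 0) : ∀ n, (1 - q * w ^ 2) * (VV q n).eval (w⁻¹ + q * w) =
    (w⁻¹) ^ n - q * w ^ 2 * (q * w) ^ n
  | 0 => by simp [VV]
  | 1 => by simp [VV]; field_simp; ring
  | (n + 2) => by
    have h1 := VV_eval q w hw (n + 1)
    have h2 := VV_eval q w hw n
    rw [VV]
    simp only [Polynomial.eval_sub, Polynomial.eval_mul, Polynomial.eval_X, Polynomial.eval_C]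
    have : (1 - q * w ^ 2) * ((w⁻¹ + q * w) * Polynomial.eval (w⁻¹ + q * w) (VV q (n + 1)) -
      q * Polynomial.eval (w⁻¹ + q * w) (VV q n)) = (w⁻¹ + q * w) * ((w⁻¹) ^ (n+1) - q * w ^ 2 * (q * w) ^ (n+1))
        - q * ((w⁻¹) ^ n - q * w ^ 2 * (q * w) ^ n) := by
      rw [← h1, ← h2]; ring
    rw [this]
    have e : (w⁻¹) * w = 1 := inv_mul_cancel₀ hw
    generalize w⁻¹ = v at *
    ring_nf
    have e2 : w ^ 2 * v = w := by rw [pow_two, mul_assoc, mul_comm w v, e, mul_one]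
    have e3 : w ^ 3 * v = w^2 := by linear_combination w * e2
    linear_combination (q * v ^ n) * e - q^2 * (w * q) ^ n * e3

noncomputable def phi (q b : ℂ) (i : ℕ) : Polynomial ℂ :=
  ∏ r ∈ Finset.range i, (Polynomial.X - Polynomial.C (b * q ^ r + q / (b * q ^ r)))

lemma phi_monic (q b : ℂ) (i : ℕ) : (phi q b i).Monic :=
  Polynomial.monic_prod_of_monic _ _ fun _ _ => Polynomial.monic_X_sub_C _

lemma phi_deg (q b : ℂ) (i : ℕ) : (phi q b i).natDegree = i := by
  unfold phi
  rw [Polynomial.natDegree_prod_of_monic _ _ fun _ _ => Polynomial.monic_X_sub_C _]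
  simp only [Polynomial.natDegree_X_sub_C]
  simp

lemma tt_swap (q b c d : ℂ) (k : ℕ) : tt q b c d k = tt q b d c k := by
  unfold tt rho
  refine Finset.prod_congr rfl fun i _ => ?_
  rw [mul_right_comm (1 - b * q ^ i), mul_right_comm (1 - q ^ 2 * q ^ i / b), mul_right_comm b]

lemma shift_phi_d {q b c d : ℂ} (hq : q ≠ 0) (hb : NP q b) (hc : NP q c) (hd : NP q d) (k i : ℕ) :
    (phi q d i).eval (1 + q) * tt q b c (d * q ^ i) k =
      tt q b c d k * (phi q d i).eval ((q ^ k)⁻¹ + q * q ^ k) := by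
  induction i with
  | zero => simp [phi]
  | succ i ih =>
    have hdi : NP q (d * q ^ i) := by simpa using hd.mul hq i
    have hdi' : NP q (d * q ^ i * q) := by simpa using hdi.mul hq 1
    have h := shift_d hq (hb.good hq) (hc.good hq) (hdi'.good hq) (hdi.good hq) k
    have e : ∀ z, (phi q d (i + 1)).eval z = (phi q d i).eval z * (z - (d * q ^ i + q / (d * q ^ i))) := by
      intro z
      simp [phi, Finset.prod_range_succ, Polynomial.eval_mul]
    rw [e, e, pow_succ, ← mul_assoc d]
    have h0 := hdi.1
    generalize d * q ^ i = D at *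
    have hw : q ^ k ≠ 0 := pow_ne_zero _ hq
    have e1 : (1 - D) * (1 - q / D) = 1 + q - (D + q / D) := by field_simp; ring
    have e2 : (q ^ k)⁻¹ * (1 - D * q ^ k) * (1 - q * q ^ k / D) = (q ^ k)⁻¹ + q * q ^ k - (D + q / D) := by
      field_simp; ring
    rw [e1, e2] at h
    rw [← mul_assoc, ← ih]
    linear_combination (phi q d i).eval (1 + q) * h

lemma shift_phi {q a b c : ℂ} (hq : q ≠ 0) (ha : NP q a) (hb : NP q b) (hc : NP q c) (k i j : ℕ) :
    (phi q b i).eval (1 + q) * (phi q c j).eval (1 + q) * tt q a (b * q ^ i) (c * q ^ j) k =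
      tt q a b c k * ((phi q b i).eval ((q ^ k)⁻¹ + q * q ^ k) * (phi q c j).eval ((q ^ k)⁻¹ + q * q ^ k)) := by
  have hbi : NP q (b * q ^ i) := by simpa using hb.mul hq i
  have h1 := shift_phi_d hq ha hbi hc k j
  have h2 := shift_phi_d hq ha hc hb k i
  rw [tt_swap, tt_swap q a c b] at h2
  linear_combination (phi q b i).eval (1 + q) * h1 + (phi q c j).eval ((q ^ k)⁻¹ + q * q ^ k) * h2

lemma poly_cont (q : ℂ) (R : Polynomial ℂ) (j : ℕ) (hR : R.natDegree ≤ j) :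
    ∃ g : ℂ → ℂ, Continuous g ∧ ∀ w, w ≠ 0 → w ^ j * R.eval (w⁻¹ + q * w) = g w := by
  refine ⟨fun w => ∑ a ∈ Finset.range (j + 1), R.coeff a * (w ^ (j - a) * (1 + q * w ^ 2) ^ a), by fun_prop, ?_⟩
  intro w hw
  rw [Polynomial.eval_eq_sum_range' (n := j + 1) (by omega), Finset.mul_sum]
  refine Finset.sum_congr rfl fun a ha => ?_
  have : a ≤ j := by simp at ha; omega
  obtain ⟨m, rfl⟩ := Nat.exists_eq_add_of_le this
  have e : (1 + q * w ^ 2) = w * (w⁻¹ + q * w) := by field_simp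
  rw [e, mul_pow, pow_add, Nat.add_sub_cancel_left]
  ring

lemma tt_sum_poly {q : ℂ} (hq : q ≠ 0) (hq1 : ‖q‖ < 1) (b c d : ℂ) (m : ℕ)
    (h : ‖q ^ 2 / (b * c * d) * (q ^ m)⁻¹‖ < 1) (R : Polynomial ℂ) (i j : ℕ) (hR : R.natDegree ≤ j)
    (hij : i + j ≤ m) (G : ℂ → ℂ) (hG : Continuous G) :
    Summable fun k : ℕ => tt q b c d k * (((q ^ k)⁻¹) ^ i * R.eval ((q ^ k)⁻¹ + q * q ^ k) * G (q ^ k)) := by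
  obtain ⟨g, hg, hg2⟩ := poly_cont q R j hR
  have hw := pow_tendsto hq1
  have hc : Continuous fun w : ℂ => w ^ (m - i - j) * g w * G w := by fun_prop
  refine (summable_mul_conv (tt_summable hq1 b c d (q ^ m)⁻¹ h) ((hc.tendsto 0).comp hw)).congr ?_
  intro k
  have hk : q ^ k ≠ 0 := pow_ne_zero _ hq
  simp only [Function.comp]
  rw [← hg2 _ hk]
  obtain ⟨l, rfl⟩ := Nat.exists_eq_add_of_le hij
  have e : i + j + l - i - j = l := by omega
  rw [e]
  have e2 : ((q ^ (i + j + l))⁻¹) ^ k = ((q ^ k)⁻¹) ^ i * ((q ^ k)⁻¹) ^ j * ((q ^ k)⁻¹) ^ l := by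
    rw [← pow_add, ← pow_add, inv_pow, inv_pow, ← pow_mul, ← pow_mul, mul_comm]
  rw [e2]
  have e3 : ∀ x : ℕ, ((q ^ k)⁻¹) ^ x * (q ^ k) ^ x = 1 := by
    intro x; rw [← mul_pow, inv_mul_cancel₀ hk, one_pow]
  linear_combination (tt q b c d k * (q ^ k)⁻¹ ^ i * Polynomial.eval ((q ^ k)⁻¹ + q * q ^ k) R * G (q ^ k)) * 
    (e3 j * ((q ^ k)⁻¹) ^ l * (q^k)^l + e3 l)

noncomputable def YY (q : ℂ) (ν : ℤ) : ℂ := (q ^ ν)⁻¹ + q * q ^ ν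

structure IsT (q b c d : ℂ) (T : ℤ → ℂ) : Prop where
  zero : T 0 = 1
  succ : ∀ ν, T (ν + 1) = T ν * rho q b c d (q ^ ν)

lemma IsT.nat {q b c d : ℂ} {T : ℤ → ℂ} (hT : IsT q b c d T) (k : ℕ) : T k = tt q b c d k := by
  induction k with
  | zero => simpa [tt_zero] using hT.zero
  | succ k ih => rw [tt_succ, ← ih, Nat.cast_succ, hT.succ, zpow_natCast]

lemma IsT.neg {q b c d : ℂ} {T : ℤ → ℂ} (hT : IsT q b c d T) (hq : q ≠ 0) (hb : NP q b) (hc : NP q c)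
    (hd : NP q d) (k : ℕ) : T (-(k + 1 : ℤ)) = - (q * (q ^ k) ^ 2) * tt q b c d k := by
  have hb0 := hb.1
  have hc0 := hc.1
  have hd0 := hd.1
  have aux : ∀ b : ℂ, NP q b → ∀ w : ℂ, w ≠ 0 → 1 - b * (q ^ 2 * w)⁻¹ = - b * (q ^ 2 * w)⁻¹ * (1 - q ^ 2 * w / b) := by
    intro b hb w hw
    have := hb.1
    field_simp
    ring
  have aux2 : ∀ b : ℂ, NP q b → ∀ w : ℂ, w ≠ 0 → 1 - q ^ 2 * (q ^ 2 * w)⁻¹ / b = - (b * w)⁻¹ * (1 - b * w) := by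
    intro b hb w hw
    have := hb.1
    field_simp
    ring
  induction k with
  | zero =>
    have h := hT.succ (-1)
    rw [neg_add_cancel, hT.zero] at h
    simp only [Nat.cast_zero, zero_add, tt_zero, pow_zero, one_pow, mul_one]
    have h1 := hb.ne2 hq 1
    have h2 := hc.ne2 hq 1
    have h3 := hd.ne2 hq 1
    have e : rho q b c d (q ^ (-1 : ℤ)) = - q⁻¹ := by
      unfold rho
      rw [zpow_neg_one]
      rw [zpow_one] at h1 h2 h3
      have a1 : ∀ b : ℂ, b ≠ 0 → 1 - b * q⁻¹ = - b * q⁻¹ * (1 - q / b) := by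
        intro b hb; field_simp; ring
      have a2 : ∀ b : ℂ, 1 - q ^ 2 * q⁻¹ / b = 1 - q / b := by
        intro b; congr 2; field_simp
      rw [a1 b hb0, a1 c hc0, a1 d hd0, a2, a2, a2]
      generalize q / b = z1 at *
      generalize q / c = z2 at *
      generalize q / d = z3 at *
      field_simp
    rw [e] at h
    field_simp at h
    linear_combination h
  | succ k ih =>
    have h := hT.succ (-((k + 1 : ℕ) + 1 : ℤ))
    have e0 : -((k + 1 : ℕ) + 1 : ℤ) + 1 = -(k + 1 : ℤ) := by push_cast; ring
    rw [e0, ih] at h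
    have e1 : q ^ (-((k + 1 : ℕ) + 1 : ℤ)) = (q ^ 2 * q ^ k)⁻¹ := by
      rw [zpow_neg, ← pow_add, ← zpow_natCast]; congr 2; push_cast; ring
    rw [e1] at h
    rw [tt_succ, pow_succ q k]
    have hw : q ^ k ≠ 0 := pow_ne_zero _ hq
    have n1 : 1 - b * q ^ k ≠ 0 := by simpa using hb.ne1 hq k
    have n2 : 1 - c * q ^ k ≠ 0 := by simpa using hc.ne1 hq k
    have n3 : 1 - d * q ^ k ≠ 0 := by simpa using hd.ne1 hq k
    have g1 := (hb.good hq).2 k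
    have g2 := (hc.good hq).2 k
    have g3 := (hd.good hq).2 k
    generalize q ^ k = w at *
    have e2 : rho q b c d (q ^ 2 * w)⁻¹ = (q ^ 2 * rho q b c d w)⁻¹ := by
      unfold rho
      rw [aux b hb w hw, aux c hc w hw, aux d hd w hw, aux2 b hb w hw, aux2 c hc w hw, aux2 d hd w hw]
      generalize q ^ 2 * w / b = z1 at *
      generalize q ^ 2 * w / c = z2 at *
      generalize q ^ 2 * w / d = z3 at *
      generalize 1 - b * w = y1 at *
      generalize 1 - c * w = y2 at *
      generalize 1 - d * w = y3 at *
      field_simp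
    have hr : rho q b c d w ≠ 0 := by
      unfold rho
      positivity
    rw [e2] at h
    generalize rho q b c d w = r at *
    field_simp at h
    linear_combination -h

lemma YY_neg {q : ℂ} (hq : q ≠ 0) (k : ℕ) : YY q (-(k + 1 : ℤ)) = (q ^ k)⁻¹ + q * q ^ k := by
  unfold YY
  rw [zpow_neg, zpow_add₀ hq, zpow_natCast, zpow_one]
  field_simp
  ring

lemma entry {q b c d : ℂ} {T : ℤ → ℂ} (hT : IsT q b c d T) (hq : q ≠ 0) (hq1 : ‖q‖ < 1)
    (hb : NP q b) (hc : NP q c) (hd : NP q d) (m : ℕ)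
    (h : ‖q ^ 2 / (b * c * d) * (q ^ m)⁻¹‖ < 1) (R : Polynomial ℂ) (i j : ℕ) (hR : R.natDegree ≤ j)
    (hij : i + j ≤ m) :
    HasSum (fun ν : ℤ => T ν * ((q ^ ν)⁻¹) ^ i * R.eval (YY q ν))
      (∑' k : ℕ, (tt q b c d k * (1 - q * (q ^ k) ^ 2)) *
        ((VV q i).eval ((q ^ k)⁻¹ + q * q ^ k) * R.eval ((q ^ k)⁻¹ + q * q ^ k))) := by
  have s1 := tt_sum_poly hq hq1 b c d m h R i j hR hij (fun _ => 1) continuous_const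
  have s2 := tt_sum_poly hq hq1 b c d m h R 0 j hR (by omega) (fun w => -(q * w ^ 2) * (q * w) ^ i) (by fun_prop)
  have e1 : ∀ k : ℕ, T k * ((q ^ (k : ℤ))⁻¹) ^ i * R.eval (YY q k) =
    tt q b c d k * (((q ^ k)⁻¹) ^ i * R.eval ((q ^ k)⁻¹ + q * q ^ k) * 1) := by
    intro k
    rw [hT.nat, YY, zpow_natCast]; ring
  have e2 : ∀ k : ℕ, T (-(k + 1 : ℤ)) * ((q ^ (-(k + 1 : ℤ)))⁻¹) ^ i * R.eval (YY q (-(k + 1 : ℤ))) =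
    tt q b c d k * (((q ^ k)⁻¹) ^ 0 * R.eval ((q ^ k)⁻¹ + q * q ^ k) * (-(q * (q ^ k) ^ 2) * (q * q ^ k) ^ i)) := by
    intro k
    rw [hT.neg hq hb hc hd, YY_neg hq, zpow_neg, inv_inv, zpow_add₀ hq, zpow_natCast, zpow_one]; ring
  have hh := HasSum.of_nat_of_neg_add_one (f := fun ν : ℤ => T ν * ((q ^ ν)⁻¹) ^ i * R.eval (YY q ν))
    (by simp only [e1]; exact s1.hasSum) (by simp only [e2]; exact s2.hasSum)
  rw [← s1.tsum_add s2] at hh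
  convert hh using 2
  ext k
  have := VV_eval q (q ^ k) (pow_ne_zero _ hq) i
  linear_combination tt q b c d k * R.eval ((q ^ k)⁻¹ + q * q ^ k) * this

lemma main_det {q a b c : ℂ} {T : ℤ → ℂ} (hT : IsT q a b c T) (hq : q ≠ 0) (hq1 : ‖q‖ < 1)
    (ha : NP q a) (hb : NP q b) (hc : NP q c) (m : ℕ)
    (h : ‖q ^ 2 / (a * b * c) * (q ^ (2 * m))⁻¹‖ < 1) :
    HasSum (fun ν : Fin (m + 1) → ℤ => (∏ i, (T (ν i) * ((q ^ (ν i))⁻¹) ^ (i : ℕ))) *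
        ∏ i : Fin (m + 1), ∏ j ∈ Finset.Ioi i, (YY q (ν j) - YY q (ν i)))
      ((∏ i : Fin (m + 1), (phi q b i).eval (1 + q)) * (∏ i : Fin (m + 1), (phi q c i).eval (1 + q)) *
        Matrix.det (Matrix.of fun i j : Fin (m + 1) => SS q a (b * q ^ (i : ℕ)) (c * q ^ (j : ℕ)))) := by
  have hent := fun i j : Fin (m + 1) => entry hT hq hq1 ha hb hc (2 * m) h (phi q c j) i j (phi_deg q c j).le (by omega)
  have h1 := hasSum_det (fun (i : Fin (m + 1)) ν => T ν * ((q ^ ν)⁻¹) ^ (i : ℕ)) (YY q) (fun j => phi q c j)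
    (fun j => phi_deg q c j) (fun j => phi_monic q c j) (fun i j => (hent i j).summable)
  convert h1 using 1
  simp only [fun i j => (hent i j).tsum_eq]
  have hs : ∀ i j : Fin (m + 1), Summable fun k : ℕ => (tt q a b c k * (1 - q * (q ^ k) ^ 2)) *
      ((q ^ k)⁻¹ + q * q ^ k) ^ ((i : ℕ) + j) := by
    intro i j
    have := tt_sum_poly hq hq1 a b c (2 * m) h (Polynomial.X ^ ((i : ℕ) + j)) 0 (i + j) (by simp) (by omega)
      (fun w => 1 - q * w ^ 2) (by fun_prop)
    refine this.congr fun k => ?_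
    simp
    ring
  rw [hankel (fun k : ℕ => tt q a b c k * (1 - q * (q ^ k) ^ 2)) (fun k : ℕ => (q ^ k)⁻¹ + q * q ^ k)
    (fun i => VV q i) (fun j => phi q c j) (fun i => (VV_monic q i).2) (fun i => (VV_monic q i).1)
    (fun j => phi_deg q c j) (fun j => phi_monic q c j) hs,
    ← hankel (fun k : ℕ => tt q a b c k * (1 - q * (q ^ k) ^ 2)) (fun k : ℕ => (q ^ k)⁻¹ + q * q ^ k)
    (fun i => phi q b i) (fun j => phi q c j) (fun j => phi_deg q b j) (fun j => phi_monic q b j)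
    (fun j => phi_deg q c j) (fun j => phi_monic q c j) hs]
  rw [mul_assoc, ← Matrix.det_mul_row, ← Matrix.det_mul_column]
  congr 1
  ext i j
  simp only [Matrix.of_apply, SS]
  rw [← mul_assoc, ← tsum_mul_left]
  congr 1
  ext k
  have := shift_phi hq ha hb hc k i j
  linear_combination (1 - q * (q ^ k) ^ 2) * this
open Filter Topology

noncomputable def pf (q x : ℂ) (k : ℕ) : ℂ := ∏ r ∈ Finset.range k, (1 - x * q ^ r)

lemma qp_back {q : ℂ} (hq : q ≠ 0) (hq1 : ‖q‖ < 1) (x : ℂ) (j : ℕ) :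
    qPochInf (x * (q⁻¹) ^ j) q = (∏ k ∈ Finset.range j, (1 - x * (q⁻¹) ^ (k + 1))) * qPochInf x q := by
  induction j with
  | zero => simp
  | succ j ih =>
    rw [qp_step hq1, Finset.prod_range_succ]
    have : x * q⁻¹ ^ (j + 1) * q = x * q⁻¹ ^ j := by rw [pow_succ]; field_simp
    rw [this, ih]; ring

lemma qp_back_Ico {q : ℂ} (hq : q ≠ 0) (hq1 : ‖q‖ < 1) (x : ℂ) (j m : ℕ) (hj : j ≤ m) :
    qPochInf (x * (q⁻¹) ^ m) q = (∏ k ∈ Finset.Ico j m, (1 - x * (q⁻¹) ^ (k + 1))) * qPochInf (x * (q⁻¹) ^ j) q := by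
  rw [qp_back hq hq1, qp_back hq hq1, ← Finset.prod_range_mul_prod_Ico _ hj]
  ring

lemma phi_val {q : ℂ} (hq : q ≠ 0) (hq1 : ‖q‖ < 1) (b : ℂ) (hb : b ≠ 0) (i : ℕ) :
    (phi q b i).eval (1 + q) * qPochInf (q ^ 2 / b) q = pf q b i * qPochInf (q ^ 2 / b * (q⁻¹) ^ i) q := by
  rw [qp_back hq hq1, ← mul_assoc]
  congr 1
  unfold phi pf
  rw [Polynomial.eval_prod, ← Finset.prod_mul_distrib]
  refine Finset.prod_congr rfl fun r _ => ?_
  simp only [Polynomial.eval_sub, Polynomial.eval_X, Polynomial.eval_C]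
  rw [inv_pow, pow_succ]
  field_simp
  ring

lemma det_core {q : ℂ} (hq : q ≠ 0) (hq1 : ‖q‖ < 1) (a β : ℂ) (m : ℕ)
    (hβ : ∀ i : ℕ, i ≤ 2 * m → qPochInf (β * (q⁻¹) ^ i) q ≠ 0) :
    Matrix.det (Matrix.of fun i j : Fin (m + 1) =>
      qPochInf (β * a * (q⁻¹) ^ ((i : ℕ) + j)) q / qPochInf (β * (q⁻¹) ^ ((i : ℕ) + j)) q) =
    (∏ i : Fin (m + 1), (qPochInf (β * a * (q⁻¹) ^ (i : ℕ)) q / qPochInf (β * (q⁻¹) ^ ((i : ℕ) + m)) q)) *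
    ((∏ i : Fin (m + 1), ∏ j ∈ Finset.Ioi i, ((q⁻¹) ^ (j : ℕ) - (q⁻¹) ^ (i : ℕ))) *
     ∏ i : Fin (m + 1), ((β * (q⁻¹) ^ (i : ℕ)) ^ (i : ℕ) * pf q a i)) := by
  have h1 : ∏ i : Fin (m + 1), ((β * (q⁻¹) ^ (i : ℕ)) ^ (i : ℕ) * pf q a i) =
     ∏ l ∈ Finset.range m, ∏ k ∈ Finset.range (l + 1), (β * (q⁻¹) ^ (l + 1) - β * a * (q⁻¹) ^ (k + 1)) := by
    rw [Fin.prod_univ_succ]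
    simp only [Fin.val_zero, pow_zero, one_mul, pf, Finset.range_zero, Finset.prod_empty, Fin.val_succ]
    rw [Fin.prod_univ_eq_prod_range (fun l => (β * q⁻¹ ^ (l + 1)) ^ (l + 1) * ∏ r ∈ Finset.range (l + 1), (1 - a * q ^ r))]
    refine Finset.prod_congr rfl fun l _ => ?_
    rw [← Finset.prod_range_reflect (fun r => 1 - a * q ^ r)]
    have hc : (β * q⁻¹ ^ (l + 1)) ^ (l + 1) = ∏ _k ∈ Finset.range (l + 1), (β * q⁻¹ ^ (l + 1)) := by simp
    rw [hc, ← Finset.prod_mul_distrib]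
    refine Finset.prod_congr rfl fun k hk => ?_
    have : k ≤ l := by simp at hk; omega
    obtain ⟨p, rfl⟩ := Nat.exists_eq_add_of_le this
    have e : k + p + 1 - 1 - k = p := by omega
    rw [e, inv_pow, inv_pow, pow_succ, pow_add, pow_succ]
    field_simp
  rw [h1, ← det_eval_pol m (fun k => β * a * (q⁻¹) ^ (k + 1)) (fun k => β * (q⁻¹) ^ (k + 1)) (fun i => (q⁻¹) ^ (i : ℕ)),
    ← Matrix.det_mul_column]
  congr 1
  ext i j
  simp only [Matrix.of_apply]
  have n1 := hβ (i + j) (by omega)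
  have n2 := hβ (i + m) (by omega)
  have e1 := qp_back hq hq1 (β * a * (q⁻¹) ^ (i : ℕ)) j
  have e2 := qp_back_Ico hq hq1 (β * (q⁻¹) ^ (i : ℕ)) j m (by omega)
  rw [mul_assoc _ (q⁻¹ ^ (i : ℕ)), ← pow_add] at e1
  rw [mul_assoc _ (q⁻¹ ^ (i : ℕ)) (q⁻¹ ^ m), ← pow_add, mul_assoc _ (q⁻¹ ^ (i : ℕ)) (q⁻¹ ^ (j : ℕ)), ← pow_add] at e2
  rw [div_mul_eq_mul_div, div_eq_div_iff n1 n2, e1, e2]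
  have c1 : ∀ x : ℕ, β * a * q⁻¹ ^ (i : ℕ) * q⁻¹ ^ (x + 1) = β * a * q⁻¹ ^ (x + 1) * q⁻¹ ^ (i : ℕ) := fun x => by ring
  have c2 : ∀ x : ℕ, β * q⁻¹ ^ (i : ℕ) * q⁻¹ ^ (x + 1) = β * q⁻¹ ^ (x + 1) * q⁻¹ ^ (i : ℕ) := fun x => by ring
  simp only [c1, c2]
  ring

lemma tt_pf (q b c d : ℂ) (k : ℕ) : tt q b c d k = pf q b k * pf q c k * pf q d k /
    (pf q (q ^ 2 / b) k * pf q (q ^ 2 / c) k * pf q (q ^ 2 / d) k) * (q ^ 2 / (b * c * d)) ^ k := by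
  unfold tt rho pf
  have e : ∀ b : ℂ, ∀ w, q ^ 2 * w / b = q ^ 2 / b * w := fun b w => by ring
  simp only [e, Finset.prod_mul_distrib, Finset.prod_div_distrib, Finset.prod_const, Finset.card_range]
  rw [div_pow, mul_pow, mul_pow]

lemma NP.qp {q b : ℂ} (h : NP q b) (hq : q ≠ 0) (hq1 : ‖q‖ < 1) : qPochInf b q ≠ 0 := by
  apply qp_ne hq1
  intro i hi
  apply h.ne1 hq i
  rw [zpow_natCast, hi, sub_self]

lemma NP.inv {q b : ℂ} (h : NP q b) (hq : q ≠ 0) : NP q (q ^ 2 / b) := by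
  have hb := h.1
  refine ⟨by positivity, fun m hm => ?_⟩
  apply h.2 (2 - m)
  rw [zpow_sub₀ hq, ← hm]
  rw [zpow_ofNat]
  field_simp

lemma NP.mulnat {q b : ℂ} (h : NP q b) (hq : q ≠ 0) (k : ℕ) : NP q (b * q ^ k) := by
  simpa using h.mul hq k

lemma NP.mulinv {q b : ℂ} (h : NP q b) (hq : q ≠ 0) (k : ℕ) : NP q (b * (q⁻¹) ^ k) := by
  simpa using h.mul hq (-k)

lemma NP.pf_ne {q b : ℂ} (h : NP q b) (hq : q ≠ 0) (k : ℕ) : pf q b k ≠ 0 := by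
  unfold pf
  refine Finset.prod_ne_zero_iff.2 fun i _ => ?_
  simpa using h.ne1 hq i

lemma value {q a b c : ℂ} (hq : q ≠ 0) (hq1 : ‖q‖ < 1)
    (ha : NP q a) (hb : NP q b) (hc : NP q c) (m : ℕ)
    (h : ‖q ^ 2 / (a * b * c) * (q ^ (2 * m))⁻¹‖ < 1) :
    (∏ i : Fin (m + 1), (phi q b i).eval (1 + q)) * (∏ i : Fin (m + 1), (phi q c i).eval (1 + q)) *
        Matrix.det (Matrix.of fun i j : Fin (m + 1) => SS q a (b * q ^ (i : ℕ)) (c * q ^ (j : ℕ))) =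
    (∏ i : Fin (m + 1), (tt q a b c i * ((q⁻¹) ^ (i : ℕ)) ^ (i : ℕ))) *
    (∏ i : Fin (m + 1), ∏ j ∈ Finset.Ioi i, ((q⁻¹) ^ (j : ℕ) - (q⁻¹) ^ (i : ℕ))) *
    ∏ i : Fin (m + 1), (qPochInf q q * qPochInf (q ^ 2 / (a * b) * (q⁻¹) ^ (i : ℕ)) q *
      qPochInf (q ^ 2 / (a * c) * (q⁻¹) ^ (i : ℕ)) q * qPochInf (q ^ 2 / (b * c) * (q⁻¹) ^ (i : ℕ)) q /
      (qPochInf (q ^ 2 / a * q ^ (i : ℕ)) q * qPochInf (q ^ 2 / b * q ^ (i : ℕ)) q *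
        qPochInf (q ^ 2 / c * q ^ (i : ℕ)) q * qPochInf (q ^ 2 / (a * b * c) * (q⁻¹) ^ ((i : ℕ) + m)) q)) := by
  have ha0 := ha.1
  have hb0 := hb.1
  have hc0 := hc.1
  set β := q ^ 2 / (a * b * c) with hβdef
  have hα : q ^ 2 / (b * c) = β * a := by rw [hβdef]; field_simp
  have hnorm : ∀ i : ℕ, i ≤ 2 * m → ‖β * (q⁻¹) ^ i‖ < 1 := by
    intro i hi
    obtain ⟨l, hl⟩ := Nat.exists_eq_add_of_le hi
    have e : β * (q⁻¹) ^ i = β * (q ^ (2 * m))⁻¹ * q ^ l := by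
      rw [hl, pow_add, inv_pow]; field_simp
    rw [e, norm_mul, norm_pow]
    exact mul_lt_one_of_nonneg_of_lt_one_left (norm_nonneg _) h (pow_le_one₀ (norm_nonneg _) hq1.le)
  have hβ : ∀ i : ℕ, i ≤ 2 * m → qPochInf (β * (q⁻¹) ^ i) q ≠ 0 := by
    intro i hi
    apply qp_ne hq1
    intro k hk
    have : ‖β * (q⁻¹) ^ i * q ^ k‖ < 1 := by
      rw [norm_mul, norm_pow]
      exact mul_lt_one_of_nonneg_of_lt_one_left (norm_nonneg _) (hnorm i hi) (pow_le_one₀ (norm_nonneg _) hq1.le)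
    rw [hk] at this; simp at this
  have hSS : ∀ i j : Fin (m + 1), SS q a (b * q ^ (i : ℕ)) (c * q ^ (j : ℕ)) =
      (qPochInf q q * qPochInf (q ^ 2 / (a * b) * (q⁻¹) ^ (i : ℕ)) q /
        (qPochInf (q ^ 2 / a) q * qPochInf (q ^ 2 / b * (q⁻¹) ^ (i : ℕ)) q)) *
      ((qPochInf (q ^ 2 / (a * c) * (q⁻¹) ^ (j : ℕ)) q / qPochInf (q ^ 2 / c * (q⁻¹) ^ (j : ℕ)) q) *
      (qPochInf (β * a * (q⁻¹) ^ ((i : ℕ) + j)) q / qPochInf (β * (q⁻¹) ^ ((i : ℕ) + j)) q)) := by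
    intro i j
    have e1 : q ^ 2 / (a * (b * q ^ (i : ℕ))) = q ^ 2 / (a * b) * (q⁻¹) ^ (i : ℕ) := by
      rw [inv_pow]; field_simp
    have e2 : q ^ 2 / (a * (c * q ^ (j : ℕ))) = q ^ 2 / (a * c) * (q⁻¹) ^ (j : ℕ) := by
      rw [inv_pow]; field_simp
    have e3 : q ^ 2 / (b * q ^ (i : ℕ) * (c * q ^ (j : ℕ))) = β * a * (q⁻¹) ^ ((i : ℕ) + j) := by
      rw [inv_pow, ← hα, pow_add]; field_simp
    have e4 : q ^ 2 / (a * (b * q ^ (i : ℕ)) * (c * q ^ (j : ℕ))) = β * (q⁻¹) ^ ((i : ℕ) + j) := by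
      rw [inv_pow, hβdef, pow_add]; field_simp
    have e5 : q ^ 2 / (b * q ^ (i : ℕ)) = q ^ 2 / b * (q⁻¹) ^ (i : ℕ) := by
      rw [inv_pow]; field_simp
    have e6 : q ^ 2 / (c * q ^ (j : ℕ)) = q ^ 2 / c * (q⁻¹) ^ (j : ℕ) := by
      rw [inv_pow]; field_simp
    have hcj := hc.mulnat hq j
    rw [SS_eval hq hq1 (ha.good hq) ((hb.mulnat hq i).good hq) (hcj.good hq)
      (by
        intro N hN
        apply hcj.2 (N + 1)
        rw [div_eq_iff (pow_ne_zero _ hq), one_mul] at hN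
        exact_mod_cast hN)
      (by rw [e4]; exact hnorm _ (by omega)), e1, e2, e3, e4, e5, e6]
    simp only [div_eq_mul_inv, mul_inv]
    ring
  have hdet : Matrix.det (Matrix.of fun i j : Fin (m + 1) => SS q a (b * q ^ (i : ℕ)) (c * q ^ (j : ℕ))) =
      (∏ i : Fin (m + 1), (qPochInf q q * qPochInf (q ^ 2 / (a * b) * (q⁻¹) ^ (i : ℕ)) q /
        (qPochInf (q ^ 2 / a) q * qPochInf (q ^ 2 / b * (q⁻¹) ^ (i : ℕ)) q))) *
      ((∏ j : Fin (m + 1), (qPochInf (q ^ 2 / (a * c) * (q⁻¹) ^ (j : ℕ)) q / qPochInf (q ^ 2 / c * (q⁻¹) ^ (j : ℕ)) q)) *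
      Matrix.det (Matrix.of fun i j : Fin (m + 1) =>
      qPochInf (β * a * (q⁻¹) ^ ((i : ℕ) + j)) q / qPochInf (β * (q⁻¹) ^ ((i : ℕ) + j)) q)) := by
    rw [← Matrix.det_mul_row, ← Matrix.det_mul_column]
    congr 1
    ext i j
    simp only [Matrix.of_apply]
    exact hSS i j
  rw [hdet, det_core hq hq1 a β m hβ, hα]
  have key : ∀ i : Fin (m + 1),
    (phi q b i).eval (1 + q) * (phi q c i).eval (1 + q) * (qPochInf q q * qPochInf (q ^ 2 / (a * b) * (q⁻¹) ^ (i : ℕ)) q /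
        (qPochInf (q ^ 2 / a) q * qPochInf (q ^ 2 / b * (q⁻¹) ^ (i : ℕ)) q)) *
      (qPochInf (q ^ 2 / (a * c) * (q⁻¹) ^ (i : ℕ)) q / qPochInf (q ^ 2 / c * (q⁻¹) ^ (i : ℕ)) q) *
      (qPochInf (β * a * (q⁻¹) ^ (i : ℕ)) q / qPochInf (β * (q⁻¹) ^ ((i : ℕ) + m)) q) *
      ((β * (q⁻¹) ^ (i : ℕ)) ^ (i : ℕ) * pf q a i) =
    (tt q a b c i * ((q⁻¹) ^ (i : ℕ)) ^ (i : ℕ)) *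
     (qPochInf q q * qPochInf (q ^ 2 / (a * b) * (q⁻¹) ^ (i : ℕ)) q *
      qPochInf (q ^ 2 / (a * c) * (q⁻¹) ^ (i : ℕ)) q * qPochInf (β * a * (q⁻¹) ^ (i : ℕ)) q /
      (qPochInf (q ^ 2 / a * q ^ (i : ℕ)) q * qPochInf (q ^ 2 / b * q ^ (i : ℕ)) q *
        qPochInf (q ^ 2 / c * q ^ (i : ℕ)) q * qPochInf (β * (q⁻¹) ^ ((i : ℕ) + m)) q)) := by
    intro i
    rw [tt_pf, ← hβdef, mul_pow]
    have n1 := (hb.inv hq).qp hq hq1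
    have n2 := (hc.inv hq).qp hq hq1
    have n3 := ((hb.inv hq).mulinv hq i).qp hq hq1
    have n4 := ((hc.inv hq).mulinv hq i).qp hq hq1
    have n5 := ((ha.inv hq).mulnat hq i).qp hq hq1
    have n6 := ((hb.inv hq).mulnat hq i).qp hq hq1
    have n7 := ((hc.inv hq).mulnat hq i).qp hq hq1
    have p1 := (ha.inv hq).pf_ne hq i
    have p2 := (hb.inv hq).pf_ne hq i
    have p3 := (hc.inv hq).pf_ne hq i
    have s1 : qPochInf (q ^ 2 / a) q = pf q (q ^ 2 / a) i * qPochInf (q ^ 2 / a * q ^ (i : ℕ)) q := qp_split hq1 _ _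
    have s2 : qPochInf (q ^ 2 / b) q = pf q (q ^ 2 / b) i * qPochInf (q ^ 2 / b * q ^ (i : ℕ)) q := qp_split hq1 _ _
    have s3 : qPochInf (q ^ 2 / c) q = pf q (q ^ 2 / c) i * qPochInf (q ^ 2 / c * q ^ (i : ℕ)) q := qp_split hq1 _ _
    have f1 := phi_val hq hq1 b hb0 i
    have f2 := phi_val hq hq1 c hc0 i
    rw [← eq_div_iff n1] at f1
    rw [← eq_div_iff n2] at f2
    have nb := hβ (i + m) (by omega)
    rw [f1, f2, s1, s2, s3]
    generalize qPochInf (q ^ 2 / a * q ^ (i : ℕ)) q = x1 at *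
    generalize qPochInf (q ^ 2 / b * q ^ (i : ℕ)) q = x2 at *
    generalize qPochInf (q ^ 2 / c * q ^ (i : ℕ)) q = x3 at *
    generalize qPochInf (q ^ 2 / b * (q⁻¹) ^ (i : ℕ)) q = x4 at *
    generalize qPochInf (q ^ 2 / c * (q⁻¹) ^ (i : ℕ)) q = x5 at *
    generalize qPochInf (β * (q⁻¹) ^ ((i : ℕ) + m)) q = x6 at *
    generalize pf q (q ^ 2 / a) i = x7 at *
    generalize pf q (q ^ 2 / b) i = x8 at *
    generalize pf q (q ^ 2 / c) i = x9 at *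
    generalize (q⁻¹ ^ (i : ℕ)) ^ (i : ℕ) = x10
    clear_value β
    field_simp
  have hk := Finset.prod_congr (rfl : (Finset.univ : Finset (Fin (m + 1))) = Finset.univ) (fun i _ => key i)
  simp only [Finset.prod_mul_distrib] at hk ⊢
  linear_combination (∏ i : Fin (m + 1), ∏ j ∈ Finset.Ioi i, ((q⁻¹) ^ (j : ℕ) - (q⁻¹) ^ (i : ℕ))) * hk
open Filter Topology

lemma qi_succ {q X : ℂ} (h : NP q X) (hq : q ≠ 0) (hq1 : ‖q‖ < 1) (ν : ℤ) :
    qPochInt X q (ν + 1) = qPochInt X q ν * (1 - X * q ^ ν) := by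
  have h1 := (h.mul hq ν).qp hq hq1
  have h2 := (h.mul hq (ν + 1)).qp hq hq1
  unfold qPochInt
  rw [qp_step hq1 (X * q ^ ν), mul_assoc X, ← zpow_add_one₀ hq]
  have h3 := h.ne1 hq ν
  field_simp

lemma qi_ne {q X : ℂ} (h : NP q X) (hq : q ≠ 0) (hq1 : ‖q‖ < 1) (ν : ℤ) : qPochInt X q ν ≠ 0 :=
  div_ne_zero (h.qp hq hq1) ((h.mul hq ν).qp hq hq1)

lemma qi_shift {q X : ℂ} (h : NP q X) (hq : q ≠ 0) (hq1 : ‖q‖ < 1) (x k : ℤ) :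
    qPochInt (X * q ^ x) q k = qPochInt X q (k + x) / qPochInt X q x := by
  have h0 := h.qp hq hq1
  have h1 := (h.mul hq x).qp hq hq1
  have h2 := (h.mul hq (k + x)).qp hq hq1
  unfold qPochInt
  rw [mul_assoc, ← zpow_add₀ hq, add_comm x k]
  field_simp

noncomputable def TT (q a b c : ℂ) (ν : ℤ) : ℂ :=
  (qPochInt a q ν / qPochInt (q ^ 2 / a) q ν) * (qPochInt b q ν / qPochInt (q ^ 2 / b) q ν) *
    (qPochInt c q ν / qPochInt (q ^ 2 / c) q ν) * (q ^ 2 / (a * b * c)) ^ ν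

lemma TT_isT {q a b c : ℂ} (hq : q ≠ 0) (hq1 : ‖q‖ < 1) (ha : NP q a) (hb : NP q b) (hc : NP q c) :
    IsT q a b c (TT q a b c) := by
  have z : ∀ X, NP q X → qPochInt X q 0 = 1 := by
    intro X hX
    have := hX.qp hq hq1
    simp [qPochInt, this]
  have ha0 := ha.1
  have hb0 := hb.1
  have hc0 := hc.1
  refine ⟨?_, fun ν => ?_⟩
  · unfold TT
    rw [z a ha, z b hb, z c hc, z _ (ha.inv hq), z _ (hb.inv hq), z _ (hc.inv hq)]
    simp
  · unfold TT rho
    rw [qi_succ ha hq hq1, qi_succ hb hq hq1, qi_succ hc hq hq1, qi_succ (ha.inv hq) hq hq1,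
      qi_succ (hb.inv hq) hq hq1, qi_succ (hc.inv hq) hq hq1, zpow_add_one₀ (by positivity)]
    have e : ∀ b : ℂ, ∀ w, q ^ 2 * w / b = q ^ 2 / b * w := fun b w => by ring
    simp only [e, div_eq_mul_inv, mul_inv]
    ring

lemma TT_ne {q a b c : ℂ} (hq : q ≠ 0) (hq1 : ‖q‖ < 1) (ha : NP q a) (hb : NP q b) (hc : NP q c) (ν : ℤ) :
    TT q a b c ν ≠ 0 := by
  have ha0 := ha.1
  have hb0 := hb.1
  have hc0 := hc.1
  have h1 := qi_ne ha hq hq1 ν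
  have h2 := qi_ne hb hq hq1 ν
  have h3 := qi_ne hc hq hq1 ν
  have h4 := qi_ne (ha.inv hq) hq hq1 ν
  have h5 := qi_ne (hb.inv hq) hq hq1 ν
  have h6 := qi_ne (hc.inv hq) hq hq1 ν
  have h7 : (q ^ 2 / (a * b * c)) ^ ν ≠ 0 := zpow_ne_zero _ (by positivity)
  unfold TT
  positivity

lemma YY_sub {q : ℂ} (hq : q ≠ 0) (x y : ℤ) :
    (1 - q ^ (x - y)) * (1 - q ^ (x + y + 1)) = q ^ x * (YY q x - YY q y) := by
  unfold YY
  rw [zpow_sub₀ hq, zpow_add_one₀ hq, zpow_add₀ hq]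
  have h1 := zpow_ne_zero x hq
  have h2 := zpow_ne_zero y hq
  generalize q ^ x = u at *
  generalize q ^ y = v at *
  field_simp
  ring

lemma one_sub_pow_ne {q : ℂ} (hq1 : ‖q‖ < 1) (k : ℕ) (hk : k ≠ 0) : 1 - q ^ k ≠ 0 := by
  intro h
  have h1 : q ^ k = 1 := (sub_eq_zero.1 h).symm
  have h2 : ‖q‖ ^ k < 1 := pow_lt_one₀ (norm_nonneg _) hq1 hk
  rw [← norm_pow, h1] at h2
  simp at h2

lemma YY_ne {q : ℂ} (hq : q ≠ 0) (hq1 : ‖q‖ < 1) (i j : ℕ) (h : i < j) : YY q j - YY q i ≠ 0 := by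
  have e := YY_sub hq j i
  intro h0
  rw [h0, mul_zero] at e
  obtain ⟨p, rfl⟩ := Nat.exists_eq_add_of_lt h
  have e1 : (((i + p + 1 : ℕ) : ℤ) - (i : ℤ)) = ((p + 1 : ℕ) : ℤ) := by push_cast; ring
  have e2 : (((i + p + 1 : ℕ) : ℤ) + (i : ℤ) + 1) = ((i + p + 1 + i + 1 : ℕ) : ℤ) := by push_cast; ring
  rw [e1, e2, zpow_natCast, zpow_natCast] at e
  exact mul_ne_zero (one_sub_pow_ne hq1 _ (by omega)) (one_sub_pow_ne hq1 _ (by omega)) e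

lemma dp_ite (n : ℕ) (f : Fin n → Fin n → ℂ) :
    ∏ i, ∏ j ∈ Finset.Ioi i, f i j = ∏ i, ∏ j, if i < j then f i j else 1 := by
  refine Finset.prod_congr rfl fun i _ => ?_
  rw [← Finset.prod_filter]
  refine Finset.prod_congr ?_ fun _ _ => rfl
  ext j; simp

lemma dp_last (m : ℕ) (f : Fin (m + 1) → Fin (m + 1) → ℂ) :
    ∏ i, ∏ j ∈ Finset.Ioi i, f i j =
      (∏ i : Fin m, ∏ j ∈ Finset.Ioi i, f i.castSucc j.castSucc) * ∏ i : Fin m, f i.castSucc (Fin.last m) := by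
  rw [dp_ite, dp_ite, Fin.prod_univ_castSucc]
  have : ∀ j : Fin (m + 1), ¬ (Fin.last m < j) := fun j => not_lt.2 (Fin.le_last j)
  simp only [this, if_false, Finset.prod_const_one, mul_one, Fin.prod_univ_castSucc, Fin.castSucc_lt_castSucc_iff,
    Fin.castSucc_lt_last, if_true, Finset.prod_mul_distrib]

lemma dp_rev (n : ℕ) (f : Fin n → Fin n → ℂ) :
    ∏ i, ∏ j ∈ Finset.Ioi i, f i j = ∏ i, ∏ j ∈ Finset.Ioi i, f (Fin.rev j) (Fin.rev i) := by
  rw [dp_ite, dp_ite, Finset.prod_comm, ← Equiv.prod_comp Fin.revPerm]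
  refine Finset.prod_congr rfl fun i _ => ?_
  rw [← Equiv.prod_comp Fin.revPerm]
  simp

lemma dp_pow (n : ℕ) (g : Fin n → ℂ) :
    ∏ i : Fin n, ∏ j ∈ Finset.Ioi i, g j = ∏ j : Fin n, g j ^ (j : ℕ) := by
  rw [dp_ite, Finset.prod_comm]
  refine Finset.prod_congr rfl fun j _ => ?_
  rw [← Finset.prod_filter, Finset.prod_const]
  congr 1
  have : (Finset.univ.filter fun i : Fin n => i < j) = Finset.Iio j := by ext; simp
  rw [this, Fin.card_Iio]

lemma conv_of_summable {q a b c : ℂ} {T : ℤ → ℂ} (hT : IsT q a b c T) (hT0 : ∀ ν, T ν ≠ 0) (hq : q ≠ 0) (hq1 : ‖q‖ < 1)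
    (ha : NP q a) (hb : NP q b) (hc : NP q c) (m : ℕ)
    (hs : Summable (fun ν : Fin (m + 1) → ℤ => (∏ i, (T (ν i) * ((q ^ (ν i))⁻¹) ^ (i : ℕ))) *
        ∏ i : Fin (m + 1), ∏ j ∈ Finset.Ioi i, (YY q (ν j) - YY q (ν i)))) :
    ‖q ^ 2 / (a * b * c) * (q ^ (2 * m))⁻¹‖ < 1 := by
  by_contra! hγ
  set γ := q ^ 2 / (a * b * c) * (q ^ (2 * m))⁻¹ with hγdef
  let L : ℕ → (Fin (m + 1) → ℤ) := fun N => Fin.snoc (α := fun _ => ℤ) (fun i : Fin m => ((i : ℕ) : ℤ)) (N : ℤ)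
  have hL : Function.Injective L := by
    intro N M h
    have := congrFun h (Fin.last m)
    simpa [L] using this
  have h1 := (hs.comp_injective hL).tendsto_atTop_zero
  set C : ℂ := (∏ i : Fin m, (T (i : ℕ) * ((q ^ ((i : ℕ) : ℤ))⁻¹) ^ (i : ℕ))) *
    ∏ i : Fin m, ∏ j ∈ Finset.Ioi i, (YY q (j : ℕ) - YY q (i : ℕ)) with hC
  have hC0 : C ≠ 0 := by
    refine mul_ne_zero (Finset.prod_ne_zero_iff.2 fun i _ => mul_ne_zero (hT0 _) ?_)
      (Finset.prod_ne_zero_iff.2 fun i _ => Finset.prod_ne_zero_iff.2 fun j hj => ?_)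
    · positivity
    · exact YY_ne hq hq1 _ _ (Fin.lt_def.1 (Finset.mem_Ioi.1 hj))
  let w : ℕ → ℂ := fun N => pf q a N * pf q b N * pf q c N /
    (pf q (q ^ 2 / a) N * pf q (q ^ 2 / b) N * pf q (q ^ 2 / c) N) *
    ∏ i : Fin m, (1 + q * (q ^ N) ^ 2 - q ^ N * YY q (i : ℕ))
  have hw : Tendsto w atTop (𝓝 (qPochInf a q * qPochInf b q * qPochInf c q /
    (qPochInf (q ^ 2 / a) q * qPochInf (q ^ 2 / b) q * qPochInf (q ^ 2 / c) q) * 1)) := by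
    have hpf : ∀ x, Tendsto (fun N => pf q x N) atTop (𝓝 (qPochInf x q)) := fun x => qp_tendsto hq1 x
    refine Tendsto.mul (Tendsto.div (((hpf _).mul (hpf _)).mul (hpf _)) (((hpf _).mul (hpf _)).mul (hpf _)) ?_) ?_
    · exact mul_ne_zero (mul_ne_zero ((ha.inv hq).qp hq hq1) ((hb.inv hq).qp hq hq1)) ((hc.inv hq).qp hq hq1)
    · have hp := tendsto_pow_atTop_nhds_zero_of_norm_lt_one hq1
      have := tendsto_finsetProd (Finset.univ : Finset (Fin m)) (fun i _ =>
        ((tendsto_const_nhds (x := (1 : ℂ))).add ((tendsto_const_nhds (x := q)).mul (hp.pow 2))).sub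
          (hp.mul (tendsto_const_nhds (x := YY q (i : ℕ)))))
      simpa using this
  have hW : qPochInf a q * qPochInf b q * qPochInf c q /
    (qPochInf (q ^ 2 / a) q * qPochInf (q ^ 2 / b) q * qPochInf (q ^ 2 / c) q) * 1 ≠ 0 := by
    have h1 := ha.qp hq hq1
    have h2 := hb.qp hq hq1
    have h3 := hc.qp hq hq1
    have h4 := (ha.inv hq).qp hq hq1
    have h5 := (hb.inv hq).qp hq hq1
    have h6 := (hc.inv hq).qp hq hq1
    rw [mul_one]
    exact div_ne_zero (mul_ne_zero (mul_ne_zero h1 h2) h3) (mul_ne_zero (mul_ne_zero h4 h5) h6)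
  have hterm : ∀ N, ((fun ν : Fin (m + 1) → ℤ => (∏ i, (T (ν i) * ((q ^ (ν i))⁻¹) ^ (i : ℕ))) *
        ∏ i : Fin (m + 1), ∏ j ∈ Finset.Ioi i, (YY q (ν j) - YY q (ν i))) ∘ L) N = C * w N * γ ^ N := by
    intro N
    simp only [Function.comp]
    rw [dp_last, Fin.prod_univ_castSucc]
    simp only [ L, Fin.snoc_castSucc, Fin.snoc_last, Fin.val_castSucc,
      Fin.val_last]
    have e1 : ∏ i : Fin m, (1 + q * (q ^ N) ^ 2 - q ^ N * YY q (i : ℕ)) =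
       (q ^ N) ^ m * ∏ i : Fin m, (YY q N - YY q (i : ℕ)) := by
      have : (q ^ N) ^ m = ∏ _i : Fin m, q ^ N := by simp
      rw [this, ← Finset.prod_mul_distrib]
      refine Finset.prod_congr rfl fun i _ => ?_
      have hN : YY q N = (q ^ N)⁻¹ + q * q ^ N := by simp [YY]
      rw [hN]
      have : q ^ N ≠ 0 := pow_ne_zero _ hq
      field_simp
    simp only [w]
    rw [e1, hT.nat N, tt_pf, hγdef, mul_pow, hC, zpow_natCast]
    have : ((q ^ (2 * m))⁻¹) ^ N * (q ^ N) ^ m = ((q ^ N)⁻¹) ^ m := by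
      rw [inv_pow, ← pow_mul, ← pow_mul, inv_pow, ← pow_mul, show 2 * m * N = N * m + N * m by ring, pow_add]
      field_simp
    rw [← this]
    ring
  have h2 : Tendsto (fun N => C * w N) atTop (𝓝 0) := by
    rw [tendsto_zero_iff_norm_tendsto_zero] at h1 ⊢
    refine squeeze_zero (fun _ => norm_nonneg _) (fun N => ?_) h1
    rw [hterm, norm_mul _ (γ ^ N), norm_pow]
    exact le_mul_of_one_le_right (norm_nonneg _) (one_le_pow₀ hγ)
  exact mul_ne_zero hC0 hW (tendsto_nhds_unique (hw.const_mul C) h2)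
open Filter Topology

lemma zpow_sum' {q : ℂ} (hq : q ≠ 0) {ι : Type*} (s : Finset ι) (e : ι → ℤ) :
    q ^ (∑ i ∈ s, e i) = ∏ i ∈ s, q ^ e i := by
  classical
  induction s using Finset.induction_on with
  | empty => simp
  | insert i s hi ih => rw [Finset.sum_insert hi, Finset.prod_insert hi, zpow_add₀ hq, ih]

lemma rev_cast (m : ℕ) (x : Fin (m + 1)) : ((Fin.rev x : ℕ) : ℤ) = (m : ℤ) - (x : ℕ) := by
  rw [Fin.val_rev]; have := x.2; omega

lemma prod_rev (n : ℕ) (f : Fin n → ℂ) : ∏ i, f i = ∏ i, f (Fin.rev i) :=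
  (Equiv.prod_comp Fin.revPerm f).symm

lemma vec_int {q X : ℂ} (h : NP q X) (hq : q ≠ 0) (hq1 : ‖q‖ < 1) (m : ℕ) (μ : Fin (m + 1) → ℤ) :
    qPochIntVec (m + 1) (X * q ^ (m : ℤ)) q μ =
      ∏ x : Fin (m + 1), (qPochInt X q (μ (Fin.rev x) + (x : ℕ)) / qPochInt X q (x : ℕ)) := by
  unfold qPochIntVec
  rw [prod_rev]
  refine Finset.prod_congr rfl fun x _ => ?_
  rw [rev_cast, mul_assoc, ← zpow_add₀ hq, ← qi_shift h hq hq1]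
  congr 3
  ring

lemma vec_inf {q : ℂ} (hq : q ≠ 0) (X : ℂ) (m : ℕ) :
    qPochInfVec (m + 1) (X * q ^ (m : ℤ)) q = ∏ x : Fin (m + 1), qPochInf (X * q ^ (x : ℕ)) q := by
  unfold qPochInfVec
  rw [prod_rev]
  refine Finset.prod_congr rfl fun x _ => ?_
  rw [rev_cast, mul_assoc, ← zpow_add₀ hq, ← zpow_natCast]
  congr 3
  ring

lemma vec_inf' (q X : ℂ) (m : ℕ) :
    qPochInfVec (m + 1) X q = ∏ x : Fin (m + 1), qPochInf (X * (q⁻¹) ^ (x : ℕ)) q := by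
  unfold qPochInfVec
  simp

lemma vand_rw {q : ℂ} (hq : q ≠ 0) (m : ℕ) (μ ν : Fin (m + 1) → ℤ) (hν : ∀ x, ν x = μ (Fin.rev x) + (x : ℕ)) :
    ∏ i : Fin (m + 1), ∏ j ∈ Finset.Ioi i,
        ((1 - q ^ (((j : ℕ) : ℤ) - ((i : ℕ) : ℤ) + μ i - μ j)) *
          (1 - q ^ (2 * ((m + 1 : ℕ) : ℤ) - 1 - ((i : ℕ) : ℤ) - ((j : ℕ) : ℤ) + μ i + μ j)) /
          ((1 - q ^ (((j : ℕ) : ℤ) - ((i : ℕ) : ℤ))) ^ 2 *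
            (1 - q ^ (2 * ((m + 1 : ℕ) : ℤ) - 1 - ((i : ℕ) : ℤ) - ((j : ℕ) : ℤ))) ^ 2)) =
    (∏ x : Fin (m + 1), (q ^ ν x) ^ (x : ℕ)) *
    (∏ i : Fin (m + 1), ∏ j ∈ Finset.Ioi i, (YY q (ν j) - YY q (ν i))) *
    (∏ i : Fin (m + 1), ∏ j ∈ Finset.Ioi i, ((1 - q ^ ((j : ℕ) - (i : ℕ))) ^ 2 *
            (1 - q ^ ((i : ℕ) + (j : ℕ) + 1)) ^ 2)⁻¹) := by
  rw [dp_rev, ← dp_pow (m + 1) (fun x => q ^ ν x)]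
  simp only [← Finset.prod_mul_distrib]
  refine Finset.prod_congr rfl fun i _ => Finset.prod_congr rfl fun j hj => ?_
  have hij : (i : ℕ) < j := Fin.lt_def.1 (Finset.mem_Ioi.1 hj)
  rw [← YY_sub hq, div_eq_mul_inv]
  simp only [rev_cast, hν]
  have e1 : (m : ℤ) - (i : ℕ) - ((m : ℤ) - (j : ℕ)) = (((j : ℕ) - (i : ℕ) : ℕ) : ℤ) := by omega
  have e2 : 2 * ((m + 1 : ℕ) : ℤ) - 1 - ((m : ℤ) - (j : ℕ)) - ((m : ℤ) - (i : ℕ)) = (((i : ℕ) + (j : ℕ) + 1 : ℕ) : ℤ) := by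
    push_cast; ring
  rw [e1, e2, zpow_natCast, zpow_natCast]
  have e3 : (((j : ℕ) - (i : ℕ) : ℕ) : ℤ) + μ j.rev - μ i.rev = μ j.rev + (j : ℕ) - (μ i.rev + (i : ℕ)) := by
    rw [Nat.cast_sub hij.le]; ring
  have e4 : (((i : ℕ) + (j : ℕ) + 1 : ℕ) : ℤ) + μ j.rev + μ i.rev = μ j.rev + (j : ℕ) + (μ i.rev + (i : ℕ)) + 1 := by
    push_cast; ring
  rw [e3, e4]

lemma term_rw {q A B C : ℂ} (hq : q ≠ 0) (hq1 : ‖q‖ < 1) (hA : NP q A) (hB : NP q B) (hC : NP q C) (m : ℕ)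
    (s : ℂ) (hs : s = q ^ 2 / (A * B * C) * (q ^ (m : ℤ))⁻¹)
    (μ ν : Fin (m + 1) → ℤ) (hν : ∀ x, ν x = μ (Fin.rev x) + (x : ℕ)) :
    q ^ ((1 - ((m + 1 : ℕ) : ℤ)) * (∑ i, μ i) + 2 * ∑ i : Fin (m + 1), ((i : ℕ) : ℤ) * μ i) * s ^ (∑ i, μ i) *
      (qPochIntVec (m + 1) (B * q ^ (m : ℤ)) q μ * qPochIntVec (m + 1) (C * q ^ (m : ℤ)) q μ *
        qPochIntVec (m + 1) (A * q ^ (m : ℤ)) q μ /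
        (qPochIntVec (m + 1) (q ^ 2 / B * q ^ (m : ℤ)) q μ * qPochIntVec (m + 1) (q ^ 2 / C * q ^ (m : ℤ)) q μ *
          qPochIntVec (m + 1) (q ^ 2 / A * q ^ (m : ℤ)) q μ)) * (∏ x : Fin (m + 1), (q ^ ν x) ^ (x : ℕ)) =
    (∏ x : Fin (m + 1), (q ^ (2 * (x : ℕ) * (x : ℕ)) / TT q A B C (x : ℕ))) *
      ∏ x : Fin (m + 1), (TT q A B C (ν x) * ((q ^ ν x)⁻¹) ^ (x : ℕ)) := by
  have hA0 := hA.1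
  have hB0 := hB.1
  have hC0 := hC.1
  have hs0 : s ≠ 0 := by rw [hs]; positivity
  have e0 : (1 - ((m + 1 : ℕ) : ℤ)) * (∑ i, μ i) + 2 * ∑ i : Fin (m + 1), ((i : ℕ) : ℤ) * μ i =
      ∑ i : Fin (m + 1), (2 * ((i : ℕ) : ℤ) - m) * μ i := by
    rw [Finset.mul_sum, Finset.mul_sum, ← Finset.sum_add_distrib]
    refine Finset.sum_congr rfl fun i _ => ?_
    push_cast; ring
  rw [e0, zpow_sum' hq, zpow_sum' hs0, prod_rev (m + 1) (fun i => q ^ _), prod_rev (m + 1) (fun i => s ^ _),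
    vec_int hA hq hq1, vec_int hB hq hq1, vec_int hC hq hq1, vec_int (hA.inv hq) hq hq1,
    vec_int (hB.inv hq) hq hq1, vec_int (hC.inv hq) hq hq1]
  simp only [← Finset.prod_mul_distrib, ← Finset.prod_div_distrib]
  refine Finset.prod_congr rfl fun x _ => ?_
  rw [← hν, rev_cast]
  have hμ : μ (Fin.rev x) = ν x - (x : ℕ) := by rw [hν]; ring
  rw [hμ]
  set β := q ^ 2 / (A * B * C) with hβ
  have hβ0 : β ≠ 0 := by rw [hβ]; positivity
  have e1 : q ^ ((2 * ((m : ℤ) - (x : ℕ)) - m) * (ν x - (x : ℕ))) * s ^ (ν x - ((x : ℕ) : ℤ)) * (q ^ ν x) ^ (x : ℕ) =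
      β ^ ν x / β ^ ((x : ℕ) : ℤ) * (q ^ (2 * (x : ℕ) * (x : ℕ)) * ((q ^ ν x)⁻¹) ^ (x : ℕ)) := by
    rw [hs, mul_zpow, zpow_sub₀ hβ0]
    have : q ^ ((2 * ((m : ℤ) - (x : ℕ)) - m) * (ν x - (x : ℕ))) * (q ^ (m : ℤ))⁻¹ ^ (ν x - ((x : ℕ) : ℤ)) * (q ^ ν x) ^ (x : ℕ) =
      q ^ (2 * (x : ℕ) * (x : ℕ)) * ((q ^ ν x)⁻¹) ^ (x : ℕ) := by
      simp only [← zpow_natCast, ← zpow_neg, ← zpow_mul, ← zpow_add₀ hq]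
      congr 1
      push_cast; ring
    rw [← this]; ring
  unfold TT
  rw [← hβ]
  have g1 := qi_ne hA hq hq1 (x : ℕ)
  have g2 := qi_ne hB hq hq1 (x : ℕ)
  have g3 := qi_ne hC hq hq1 (x : ℕ)
  have g4 := qi_ne (hA.inv hq) hq hq1 (x : ℕ)
  have g5 := qi_ne (hB.inv hq) hq hq1 (x : ℕ)
  have g6 := qi_ne (hC.inv hq) hq hq1 (x : ℕ)
  rw [mul_right_comm, e1]
  simp only [div_eq_mul_inv, mul_inv, inv_inv]
  ring

lemma comb {q : ℂ} (hq1 : ‖q‖ < 1) (n : ℕ) :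
    qPochInf q q ^ n = (∏ i : Fin n, ∏ j ∈ Finset.Ioi i, ((1 - q ^ ((j : ℕ) - (i : ℕ))) *
            (1 - q ^ ((i : ℕ) + (j : ℕ) + 1)) ^ 2)) * (∏ i ∈ Finset.range n, (1 - q ^ (2 * i + 1))) *
      ∏ i ∈ Finset.range n, qPochInf (q ^ (n + 1) * q ^ i) q := by
  induction n with
  | zero => simp
  | succ n ih =>
    rw [pow_succ, ih, dp_last]
    simp only [Fin.val_castSucc, Fin.val_last]
    have hZ : qPochInf (q ^ (n + 1)) q ≠ 0 := by
      apply qp_ne hq1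
      intro i hi
      apply one_sub_pow_ne hq1 (n + 1 + i) (by omega)
      rw [pow_add, hi, sub_self]
    have a1 : (∏ i ∈ Finset.range (n + 1), qPochInf (q ^ (n + 1 + 1) * q ^ i) q) * qPochInf (q ^ (n + 1)) q =
        (∏ i ∈ Finset.range n, qPochInf (q ^ (n + 1) * q ^ i) q) *
          qPochInf (q ^ (2 * n + 1)) q * qPochInf (q ^ (2 * n + 2)) q := by
      have := Finset.prod_range_succ' (fun i => qPochInf (q ^ (n + 1) * q ^ i) q) (n + 1)
      rw [Finset.prod_range_succ, Finset.prod_range_succ] at this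
      simp only [← pow_add] at this ⊢
      rw [show n + 1 + (n + 1) = 2 * n + 2 by ring, show n + 1 + n = 2 * n + 1 by ring] at this
      rw [this]
      simp only [add_zero]
      congr 1
      refine Finset.prod_congr rfl fun i _ => ?_
      rw [show n + 1 + 1 + i = n + 1 + (i + 1) by ring]
    have a2 : qPochInf q q = (∏ i : Fin n, (1 - q ^ (n - (i : ℕ)))) * qPochInf (q ^ (n + 1)) q := by
      rw [qp_split hq1 q n, Fin.prod_univ_eq_prod_range (fun i => 1 - q ^ (n - i)), ← Finset.prod_range_reflect,
        pow_succ' q n]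
      congr 1
      refine Finset.prod_congr rfl fun i hi => ?_
      rw [← pow_succ']
      congr 2
      simp at hi; omega
    have a3 : qPochInf (q ^ (n + 1)) q = (∏ i : Fin n, (1 - q ^ ((i : ℕ) + n + 1))) * qPochInf (q ^ (2 * n + 1)) q := by
      rw [qp_split hq1 _ n, Fin.prod_univ_eq_prod_range (fun i => 1 - q ^ (i + n + 1)), ← pow_add]
      congr 1
      · refine Finset.prod_congr rfl fun i hi => ?_
        rw [← pow_add]; congr 2; ring
      · congr 2; ring
    have a4 : qPochInf (q ^ (2 * n + 1)) q = (1 - q ^ (2 * n + 1)) * qPochInf (q ^ (2 * n + 2)) q := by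
      rw [qp_step hq1, ← pow_succ]
    rw [Finset.prod_range_succ (fun i => 1 - q ^ (2 * i + 1)), Finset.prod_mul_distrib, Finset.prod_pow]
    apply mul_right_cancel₀ hZ
    generalize (∏ i : Fin n, ∏ j ∈ Finset.Ioi i, ((1 - q ^ ((j : ℕ) - (i : ℕ))) *
            (1 - q ^ ((i : ℕ) + (j : ℕ) + 1)) ^ 2)) = E at *
    generalize ∏ i ∈ Finset.range n, (1 - q ^ (2 * i + 1)) = O at *
    generalize (∏ i ∈ Finset.range (n + 1), qPochInf (q ^ (n + 1 + 1) * q ^ i) q) = P' at *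
    generalize (∏ i ∈ Finset.range n, qPochInf (q ^ (n + 1) * q ^ i) q) = P at *
    generalize (∏ i : Fin n, (1 - q ^ (n - (i : ℕ)))) = u at *
    generalize (∏ i : Fin n, (1 - q ^ ((i : ℕ) + n + 1))) = v at *
    generalize qPochInf (q ^ (2 * n + 1)) q = W at *
    generalize qPochInf (q ^ (2 * n + 2)) q = W' at *
    generalize qPochInf (q ^ (n + 1)) q = Z at *
    generalize 1 - q ^ (2 * n + 1) = t at *
    rw [a2]
    linear_combination (-E * u * v ^ 2 * O * t) * a1 + E * O * P * u * (Z + v * W) * a3 +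
      (E * u * v ^ 2 * O * P * W) * a4
open Filter Topology

def revEquiv (m : ℕ) : (Fin (m + 1) → ℤ) ≃ (Fin (m + 1) → ℤ) where
  toFun μ := fun x => μ (Fin.rev x) + ((x : ℕ) : ℤ)
  invFun ν := fun x => ν (Fin.rev x) - ((Fin.rev x : ℕ) : ℤ)
  left_inv μ := by funext x; simp
  right_inv ν := by funext x; simp

lemma const_rw {q A B C : ℂ} (hq : q ≠ 0) (hq1 : ‖q‖ < 1) (hA : NP q A) (hB : NP q B) (hC : NP q C) (m : ℕ) (R : Fin (m + 1) → ℂ) :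
    ((∏ x : Fin (m + 1), (q ^ (2 * (x : ℕ) * (x : ℕ)) / TT q A B C (x : ℕ))) *
      (∏ i : Fin (m + 1), ∏ j ∈ Finset.Ioi i, ((1 - q ^ ((j : ℕ) - (i : ℕ))) ^ 2 *
            (1 - q ^ ((i : ℕ) + (j : ℕ) + 1)) ^ 2)⁻¹)) *
    ((∏ i : Fin (m + 1), (tt q A B C i * ((q⁻¹) ^ (i : ℕ)) ^ (i : ℕ))) *
    (∏ i : Fin (m + 1), ∏ j ∈ Finset.Ioi i, ((q⁻¹) ^ (j : ℕ) - (q⁻¹) ^ (i : ℕ))) *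
    ∏ i : Fin (m + 1), (qPochInf q q * R i)) =
    (∏ i ∈ Finset.range (m + 1), (1 - q ^ (2 * i + 1))) *
      (∏ i : Fin (m + 1), qPochInf (q ^ (m + 2) * q ^ (i : ℕ)) q) * ∏ i, R i := by
  have h1 : ∏ i : Fin (m + 1), ∏ j ∈ Finset.Ioi i, ((q⁻¹) ^ (j : ℕ) - (q⁻¹) ^ (i : ℕ)) =
      (∏ i : Fin (m + 1), ((q⁻¹) ^ (i : ℕ)) ^ (i : ℕ)) *
        ∏ i : Fin (m + 1), ∏ j ∈ Finset.Ioi i, (1 - q ^ ((j : ℕ) - (i : ℕ))) := by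
    rw [← dp_pow (m + 1) (fun j => (q⁻¹) ^ (j : ℕ))]
    simp only [← Finset.prod_mul_distrib]
    refine Finset.prod_congr rfl fun i _ => Finset.prod_congr rfl fun j hj => ?_
    have hij : (i : ℕ) < j := Fin.lt_def.1 (Finset.mem_Ioi.1 hj)
    obtain ⟨p, hp⟩ := Nat.exists_eq_add_of_lt hij
    rw [hp, show (i : ℕ) + p + 1 - i = p + 1 by omega, add_assoc, pow_add, inv_pow, inv_pow]
    field_simp
  have h2 : (∏ x : Fin (m + 1), (q ^ (2 * (x : ℕ) * (x : ℕ)) / TT q A B C (x : ℕ))) *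
      (∏ i : Fin (m + 1), (tt q A B C i * ((q⁻¹) ^ (i : ℕ)) ^ (i : ℕ))) *
      (∏ i : Fin (m + 1), ((q⁻¹) ^ (i : ℕ)) ^ (i : ℕ)) = 1 := by
    simp only [← Finset.prod_mul_distrib]
    refine Finset.prod_eq_one fun x _ => ?_
    have hT := TT_ne hq hq1 hA hB hC (x : ℕ)
    rw [← (TT_isT hq hq1 hA hB hC).nat, ← pow_mul, inv_pow, mul_assoc 2, two_mul, pow_add]
    field_simp
  have h3 : (∏ i : Fin (m + 1), ∏ j ∈ Finset.Ioi i, ((1 - q ^ ((j : ℕ) - (i : ℕ))) ^ 2 *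
            (1 - q ^ ((i : ℕ) + (j : ℕ) + 1)) ^ 2)⁻¹) *
       (∏ i : Fin (m + 1), ∏ j ∈ Finset.Ioi i, (1 - q ^ ((j : ℕ) - (i : ℕ)))) *
       (∏ i : Fin (m + 1), ∏ j ∈ Finset.Ioi i, ((1 - q ^ ((j : ℕ) - (i : ℕ))) *
            (1 - q ^ ((i : ℕ) + (j : ℕ) + 1)) ^ 2)) = 1 := by
    simp only [← Finset.prod_mul_distrib]
    refine Finset.prod_eq_one fun i _ => Finset.prod_eq_one fun j hj => ?_
    have hij : (i : ℕ) < j := Fin.lt_def.1 (Finset.mem_Ioi.1 hj)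
    have n1 := one_sub_pow_ne hq1 ((j : ℕ) - i) (by omega)
    have n2 := one_sub_pow_ne hq1 ((i : ℕ) + j + 1) (by omega)
    field_simp
  have h4 := comb hq1 (m + 1)
  have h5 : ∏ i : Fin (m + 1), (qPochInf q q * R i) = qPochInf q q ^ (m + 1) * ∏ i, R i := by
    rw [Finset.prod_mul_distrib, Finset.prod_const, Finset.card_univ, Fintype.card_fin]
  rw [h1, h5, h4,
    Fin.prod_univ_eq_prod_range (fun i => qPochInf (q ^ (m + 2) * q ^ i) q)]
  rw [show m + 1 + 1 = m + 2 by rfl]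
  generalize (∏ x : Fin (m + 1), (q ^ (2 * (x : ℕ) * (x : ℕ)) / TT q A B C (x : ℕ))) = a1 at *
  generalize (∏ i : Fin (m + 1), (tt q A B C i * ((q⁻¹) ^ (i : ℕ)) ^ (i : ℕ))) = a2 at *
  generalize (∏ i : Fin (m + 1), ((q⁻¹) ^ (i : ℕ)) ^ (i : ℕ)) = a3 at *
  generalize (∏ i : Fin (m + 1), ∏ j ∈ Finset.Ioi i, ((1 - q ^ ((j : ℕ) - (i : ℕ))) ^ 2 *
            (1 - q ^ ((i : ℕ) + (j : ℕ) + 1)) ^ 2)⁻¹) = a4 at *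
  generalize (∏ i : Fin (m + 1), ∏ j ∈ Finset.Ioi i, (1 - q ^ ((j : ℕ) - (i : ℕ)))) = a5 at *
  generalize (∏ i : Fin (m + 1), ∏ j ∈ Finset.Ioi i, ((1 - q ^ ((j : ℕ) - (i : ℕ))) *
            (1 - q ^ ((i : ℕ) + (j : ℕ) + 1)) ^ 2)) = a6 at *
  generalize ∏ i ∈ Finset.range (m + 1), (1 - q ^ (2 * i + 1)) = a7 at *
  generalize ∏ i ∈ Finset.range (m + 1), qPochInf (q ^ (m + 2) * q ^ i) q = a8 at *
  generalize ∏ i, R i = a9 at *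
  linear_combination (a4 * a5 * a6 * a7 * a8 * a9) * h2 + (a7 * a8 * a9) * h3

lemma main_ABC {q A B C : ℂ} (hq : q ≠ 0) (hq1 : ‖q‖ < 1) (hA : NP q A) (hB : NP q B) (hC : NP q C) (m : ℕ)
    (s : ℂ) (hs : s = q ^ 2 / (A * B * C) * (q ^ (m : ℤ))⁻¹) (F : (Fin (m + 1) → ℤ) → ℂ)
    (hF : ∀ μ : Fin (m + 1) → ℤ, F μ =
    q ^ ((1 - ((m + 1 : ℕ) : ℤ)) * (∑ i, μ i) + 2 * ∑ i : Fin (m + 1), ((i : ℕ) : ℤ) * μ i) * s ^ (∑ i, μ i) *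
      (qPochIntVec (m + 1) (B * q ^ (m : ℤ)) q μ * qPochIntVec (m + 1) (C * q ^ (m : ℤ)) q μ *
        qPochIntVec (m + 1) (A * q ^ (m : ℤ)) q μ /
        (qPochIntVec (m + 1) (q ^ 2 / B * q ^ (m : ℤ)) q μ * qPochIntVec (m + 1) (q ^ 2 / C * q ^ (m : ℤ)) q μ *
          qPochIntVec (m + 1) (q ^ 2 / A * q ^ (m : ℤ)) q μ)) *
      ∏ i : Fin (m + 1), ∏ j ∈ Finset.Ioi i,
        ((1 - q ^ (((j : ℕ) : ℤ) - ((i : ℕ) : ℤ) + μ i - μ j)) *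
          (1 - q ^ (2 * ((m + 1 : ℕ) : ℤ) - 1 - ((i : ℕ) : ℤ) - ((j : ℕ) : ℤ) + μ i + μ j)) /
          ((1 - q ^ (((j : ℕ) : ℤ) - ((i : ℕ) : ℤ))) ^ 2 *
            (1 - q ^ (2 * ((m + 1 : ℕ) : ℤ) - 1 - ((i : ℕ) : ℤ) - ((j : ℕ) : ℤ))) ^ 2)))
    (hsum : Summable F) :
    ∑' μ, F μ = (∏ i ∈ Finset.range (m + 1), (1 - q ^ (2 * i + 1))) *
      (qPochInfVec (m + 1) (q ^ 2 / (A * B)) q * qPochInfVec (m + 1) (q ^ 2 / (B * C)) q *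
        qPochInfVec (m + 1) (q ^ (m + 2) * q ^ (m : ℤ)) q *
        qPochInfVec (m + 1) (q ^ 2 / (A * C)) q /
        (qPochInfVec (m + 1) s q * qPochInfVec (m + 1) (q ^ 2 / B * q ^ (m : ℤ)) q *
          qPochInfVec (m + 1) (q ^ 2 / C * q ^ (m : ℤ)) q *
          qPochInfVec (m + 1) (q ^ 2 / A * q ^ (m : ℤ)) q)) := by
  set G : (Fin (m + 1) → ℤ) → ℂ := fun ν => (∏ i, (TT q A B C (ν i) * ((q ^ (ν i))⁻¹) ^ (i : ℕ))) *
        ∏ i : Fin (m + 1), ∏ j ∈ Finset.Ioi i, (YY q (ν j) - YY q (ν i)) with hG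
  set K : ℂ := (∏ x : Fin (m + 1), (q ^ (2 * (x : ℕ) * (x : ℕ)) / TT q A B C (x : ℕ))) *
      (∏ i : Fin (m + 1), ∏ j ∈ Finset.Ioi i, ((1 - q ^ ((j : ℕ) - (i : ℕ))) ^ 2 *
            (1 - q ^ ((i : ℕ) + (j : ℕ) + 1)) ^ 2)⁻¹) with hK
  have hK0 : K ≠ 0 := by
    refine mul_ne_zero (Finset.prod_ne_zero_iff.2 fun x _ => div_ne_zero (pow_ne_zero _ hq) (TT_ne hq hq1 hA hB hC _))
      (Finset.prod_ne_zero_iff.2 fun i _ => Finset.prod_ne_zero_iff.2 fun j hj => ?_)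
    have hij : (i : ℕ) < j := Fin.lt_def.1 (Finset.mem_Ioi.1 hj)
    have n1 := one_sub_pow_ne hq1 ((j : ℕ) - i) (by omega)
    have n2 := one_sub_pow_ne hq1 ((i : ℕ) + j + 1) (by omega)
    exact inv_ne_zero (mul_ne_zero (pow_ne_zero _ n1) (pow_ne_zero _ n2))
  have hFG : F = fun μ => K * (G ∘ revEquiv m) μ := by
    funext μ
    have hν : ∀ x, (revEquiv m μ) x = μ (Fin.rev x) + (x : ℕ) := fun x => rfl
    have t := term_rw hq hq1 hA hB hC m s hs μ (revEquiv m μ) hν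
    rw [hF, vand_rw hq m μ (revEquiv m μ) hν, ← mul_assoc, ← mul_assoc, t, hK, hG, Function.comp]
    ring
  have hsG : Summable G := by
    rw [hFG, summable_mul_left_iff hK0] at hsum
    exact (Equiv.summable_iff _).1 hsum
  have hconv := conv_of_summable (TT_isT hq hq1 hA hB hC) (TT_ne hq hq1 hA hB hC) hq hq1 hA hB hC m hsG
  have hs1 := main_det (TT_isT hq hq1 hA hB hC) hq hq1 hA hB hC m hconv
  rw [value hq hq1 hA hB hC m hconv] at hs1
  have hs2 := ((Equiv.hasSum_iff (revEquiv m)).2 hs1).mul_left K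
  rw [hFG, hs2.tsum_eq]
  have hsi : ∀ i : ℕ, q ^ 2 / (A * B * C) * (q⁻¹) ^ (i + m) = s * (q⁻¹) ^ i := by
    intro i
    rw [hs, zpow_natCast, ← inv_pow, pow_add]; ring
  simp only [hsi, mul_assoc (qPochInf q q), mul_div_assoc (qPochInf q q)]
  rw [hK, const_rw hq hq1 hA hB hC, vec_inf hq, vec_inf hq, vec_inf hq, vec_inf hq, vec_inf', vec_inf', vec_inf', vec_inf']
  simp only [Finset.prod_mul_distrib, Finset.prod_inv_distrib, div_eq_mul_inv, mul_inv]
  ring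

/-- the multilateral analogue of Bailey's `₃ψ₃` summation (`δ = 1` case). -/
theorem multilateral_3psi3_delta_one (n : ℕ) (hn : 0 < n) (q s a x : ℂ)
    (hq0 : 0 < ‖q‖) (hq1 : ‖q‖ < 1)
    (ha0 : a ≠ 0) (hx0 : x ≠ 0) (hs0 : s ≠ 0)
    (h : ∀ m : ℤ, s ≠ q ^ m ∧ a * s ≠ q ^ m ∧ x ≠ q ^ m ∧ a * x ≠ q ^ m ∧
      s * x⁻¹ ≠ q ^ m ∧ a * s * x ≠ q ^ m)
    (F : (Fin n → ℤ) → ℂ)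
    (hF : ∀ μ : Fin n → ℤ, F μ =
      q ^ ((1 - (n : ℤ)) * (∑ i : Fin n, μ i) + 2 * ∑ i : Fin n, ((i : ℕ) : ℤ) * μ i) * s ^ (∑ i : Fin n, μ i) *
      (qPochIntVec n (q ^ (2 * (n : ℤ)) / (a * s)) q μ * qPochIntVec n x⁻¹ q μ *
        qPochIntVec n (a * x) q μ /
        (qPochIntVec n (a * s) q μ * qPochIntVec n (q ^ (2 * (n : ℤ)) * x) q μ *
          qPochIntVec n (q ^ (2 * (n : ℤ)) / (a * x)) q μ)) *
      ∏ i : Fin n, ∏ j ∈ Finset.Ioi i,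
        ((1 - q ^ (((j : ℕ) : ℤ) - ((i : ℕ) : ℤ) + μ i - μ j)) *
          (1 - q ^ (2 * (n : ℤ) - 1 - ((i : ℕ) : ℤ) - ((j : ℕ) : ℤ) + μ i + μ j)) /
          ((1 - q ^ (((j : ℕ) : ℤ) - ((i : ℕ) : ℤ))) ^ 2 *
            (1 - q ^ (2 * (n : ℤ) - 1 - ((i : ℕ) : ℤ) - ((j : ℕ) : ℤ))) ^ 2)))
    (hsum : Summable F) :
    (∏ i ∈ Finset.Icc 1 n, (1 - q ^ (1 + 2 * n - 2 * i))) *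
      (qPochInfVec n (s * x⁻¹) q * qPochInfVec n (a * s * x) q *
        qPochInfVec n (q ^ (2 * (n : ℤ))) q *
        qPochInfVec n (q ^ (2 * (n : ℤ)) / a) q /
        (qPochInfVec n s q * qPochInfVec n (a * s) q *
          qPochInfVec n (q ^ (2 * (n : ℤ)) * x) q *
          qPochInfVec n (q ^ (2 * (n : ℤ)) / (a * x)) q))
    = ∑' μ : Fin n → ℤ, F μ := by
  have hq : q ≠ 0 := norm_pos_iff.1 hq0
  obtain ⟨m, rfl⟩ : ∃ m, n = m + 1 := ⟨n - 1, by omega⟩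
  have hNx : NP q x := ⟨hx0, fun k => (h k).2.2.1⟩
  have hNax : NP q (a * x) := ⟨mul_ne_zero ha0 hx0, fun k => (h k).2.2.2.1⟩
  have hNas : NP q (a * s) := ⟨mul_ne_zero ha0 hs0, fun k => (h k).2.1⟩
  have hA : NP q (a * x * (q⁻¹) ^ m) := hNax.mulinv hq m
  have hB : NP q (q ^ (m + 2) / (a * s)) := by
    have := (hNas.inv hq).mulnat hq m
    rwa [show q ^ 2 / (a * s) * q ^ m = q ^ (m + 2) / (a * s) by ring] at this
  have hC : NP q (x⁻¹ * (q⁻¹) ^ m) := by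
    have := ((hNx.inv hq).mulinv hq 2).mulinv hq m
    rwa [show q ^ 2 / x * (q⁻¹) ^ 2 * (q⁻¹) ^ m = x⁻¹ * (q⁻¹) ^ m by
      rw [inv_pow q 2]; field_simp] at this
  have e2 : q ^ (2 * ((m + 1 : ℕ) : ℤ)) = q ^ m * q ^ m * q ^ 2 := by
    rw [← pow_add, ← pow_add, ← zpow_natCast]; congr 1; push_cast; ring
  have k1 : s = q ^ 2 / (a * x * (q⁻¹) ^ m * (q ^ (m + 2) / (a * s)) * (x⁻¹ * (q⁻¹) ^ m)) * (q ^ (m : ℤ))⁻¹ := by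
    rw [zpow_natCast, inv_pow, pow_add]; field_simp
  have k2 : q ^ (m + 2) / (a * s) * q ^ (m : ℤ) = q ^ (2 * ((m + 1 : ℕ) : ℤ)) / (a * s) := by
    rw [e2, zpow_natCast, pow_add]; ring
  have k3 : x⁻¹ * (q⁻¹) ^ m * q ^ (m : ℤ) = x⁻¹ := by
    rw [zpow_natCast, inv_pow]; field_simp
  have k4 : a * x * (q⁻¹) ^ m * q ^ (m : ℤ) = a * x := by
    rw [zpow_natCast, inv_pow]; field_simp
  have k5 : q ^ 2 / (q ^ (m + 2) / (a * s)) * q ^ (m : ℤ) = a * s := by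
    rw [zpow_natCast, pow_add]; field_simp
  have k6 : q ^ 2 / (x⁻¹ * (q⁻¹) ^ m) * q ^ (m : ℤ) = q ^ (2 * ((m + 1 : ℕ) : ℤ)) * x := by
    rw [e2, zpow_natCast, inv_pow]; field_simp
  have k7 : q ^ 2 / (a * x * (q⁻¹) ^ m) * q ^ (m : ℤ) = q ^ (2 * ((m + 1 : ℕ) : ℤ)) / (a * x) := by
    rw [e2, zpow_natCast, inv_pow]; field_simp
  have k8 : q ^ (m + 2) * q ^ (m : ℤ) = q ^ (2 * ((m + 1 : ℕ) : ℤ)) := by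
    rw [e2, zpow_natCast, pow_add]; ring
  have k9 : q ^ 2 / (a * x * (q⁻¹) ^ m * (q ^ (m + 2) / (a * s))) = s * x⁻¹ := by
    rw [inv_pow, pow_add]; field_simp
  have k10 : q ^ 2 / (q ^ (m + 2) / (a * s) * (x⁻¹ * (q⁻¹) ^ m)) = a * s * x := by
    rw [inv_pow, pow_add]; field_simp
  have k11 : q ^ 2 / (a * x * (q⁻¹) ^ m * (x⁻¹ * (q⁻¹) ^ m)) = q ^ (2 * ((m + 1 : ℕ) : ℤ)) / a := by
    rw [e2, inv_pow]; field_simp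
  have key := main_ABC hq hq1 hA hB hC m s k1 F (by rw [k2, k3, k4, k5, k6, k7]; exact hF) hsum
  rw [k5, k6, k7, k8, k9, k10, k11] at key
  rw [key]
  congr 1
  refine Finset.prod_nbij' (fun i => m + 1 - i) (fun i => m + 1 - i) ?_ ?_ ?_ ?_ ?_
  · intro i hi; simp at hi ⊢; omega
  · intro i hi; simp at hi ⊢; omega
  · intro i hi; simp at hi ⊢; omega
  · intro i hi; simp at hi ⊢; omega
  · intro i hi
    simp at hi
    congr 2
    omega
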